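/- arXiv:1711.11481 — 8 statements merged into one kernel-verified Lean document; each statement's English description precedes it below -/
import Mathlib

section
/- Let A_1, …, A_d be Hermitian n×n complex matrices with (n−1)² < d. If A_1, …, A_d are linearly independent over ℝ, then ⋂_{j=1}^d ker A_j = {0}. (That is, when (n−1)² < d, condition (a) implies condition (b).) -/
open Matrix

/-- The real subspace of Hermitian matrices that annihilate a given vector. -/
def hermitianAnnihilating {ι : Type*} [Fintype ι] (z : ι → ℂ) : Submodule ℝ (Matrix ι ι ℂ) where
  carrier := {M | M.IsHermitian ∧ M *ᵥ z = 0}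
  add_mem' hM hN := ⟨hM.1.add hN.1, by rw [Matrix.add_mulVec, hM.2, hN.2, add_zero]⟩
  zero_mem' := ⟨Matrix.isHermitian_zero, Matrix.zero_mulVec z⟩
  smul_mem' c M hM := ⟨by
    rw [Matrix.IsHermitian, Matrix.conjTranspose_smul, hM.1.eq, star_trivial], by
    rw [Matrix.smul_mulVec, hM.2, smul_zero]⟩

/-- Delete the `k`-th row and column and add the real and imaginary parts of each entry. -/
def reAddImMinor {ι : Type*} (k : ι) :
    Matrix ι ι ℂ →ₗ[ℝ] Matrix {i // i ≠ k} {i // i ≠ k} ℝ where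
  toFun M := Matrix.of fun i j => (M i j).re + (M i j).im
  map_add' M N := by
    ext i j
    simp only [Matrix.of_apply, Matrix.add_apply, Complex.add_re, Complex.add_im]
    ring
  map_smul' c M := by
    ext i j
    simp [mul_add]

lemma eq_zero_of_reAddImMinor_eq_zero {ι : Type*} [Fintype ι] {z : ι → ℂ} {k : ι}
    (hk : z k ≠ 0) {M : Matrix ι ι ℂ} (hM : M.IsHermitian) (hMz : M *ᵥ z = 0)
    (h0 : reAddImMinor k M = 0) : M = 0 := by
  have hsum (i j : ι) (hi : i ≠ k) (hj : j ≠ k) : (M i j).re + (M i j).im = 0 :=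
    congrFun (congrFun h0 ⟨i, hi⟩) ⟨j, hj⟩
  have hminor (i j : ι) (hi : i ≠ k) (hj : j ≠ k) : M i j = 0 := by
    have hij := hsum i j hi hj
    have hji := hsum j i hj hi
    rw [← hM.apply j i, Complex.star_def, Complex.conj_re, Complex.conj_im] at hji
    apply Complex.ext
    · rw [Complex.zero_re]; linarith
    · rw [Complex.zero_im]; linarith
  have hcol_of_row (i : ι) (hrow : ∀ j, j ≠ k → M i j = 0) : M i k = 0 := by
    have hi : ∑ j, M i j * z j = 0 := congrFun hMz i
    rw [Finset.sum_eq_single k (fun j _ hj => by rw [hrow j hj, zero_mul])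
      (fun hk' => absurd (Finset.mem_univ k) hk')] at hi
    exact (mul_eq_zero.mp hi).resolve_right hk
  have hcol (i : ι) (hi : i ≠ k) : M i k = 0 := hcol_of_row i fun j hj => hminor i j hi hj
  have hrow (j : ι) (hj : j ≠ k) : M k j = 0 := by
    rw [← hM.apply k j, hcol j hj, star_zero]
  ext i j
  rw [Matrix.zero_apply]
  by_cases hj : j = k
  · subst hj
    by_cases hi : i = j
    · subst hi
      exact hcol_of_row i hrow
    · exact hcol i hi
  · by_cases hi : i = k
    · subst hi
      exact hrow j hj
    · exact hminor i j hi hj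

/-- If `(n-1)² < d`, then condition (a) (linear independence over `ℝ` of the Hermitian
matrices `A₁, …, A_d`) implies condition (b) (trivial intersection of the kernels). -/
theorem condition_a_implies_condition_b_of_lt
    (n d : ℕ) (h : (n - 1) ^ 2 < d)
    (A : Fin d → Matrix (Fin n) (Fin n) ℂ)
    (hA : ∀ j, (A j).IsHermitian)
    (hli : LinearIndependent ℝ A) :
    (⋂ j, {z : Fin n → ℂ | (A j).mulVec z = 0}) = {0} := by
  ext z
  simp only [Set.mem_iInter, Set.mem_ofPred_eq, Set.mem_singleton_iff]
  refine ⟨fun hz => ?_, fun hz j => by rw [hz, Matrix.mulVec_zero]⟩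
  by_contra hz0
  obtain ⟨k, hk⟩ := Function.ne_iff.mp hz0
  have hspan : Submodule.span ℝ (Set.range A) ≤ hermitianAnnihilating z :=
    Submodule.span_le.mpr (Set.range_subset_iff.mpr fun j => ⟨hA j, hz j⟩)
  have hminor : LinearIndependent ℝ (reAddImMinor k ∘ A) :=
    hli.map (Submodule.disjoint_def.mpr fun M hM hM0 =>
      eq_zero_of_reAddImMinor_eq_zero hk (hspan hM).1 (hspan hM).2 hM0)
  have hcard := hminor.fintype_card_le_finrank
  rw [Module.finrank_matrix, Module.finrank_self, mul_one, Fintype.card_fin,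
    Fintype.card_subtype_compl, Fintype.card_fin, Fintype.card_subtype_eq, ← sq] at hcard
  exact absurd h hcard.not_gt
end

section
/- For every n ≥ 2 and every d with 1 ≤ d ≤ (n−1)², there exist Hermitian n×n complex matrices A_1, …, A_d that are linearly independent over ℝ but such that ⋂_{j=1}^d ker A_j ≠ {0}. (That is, when d ≤ (n−1)², condition (a) does not imply condition (b).) -/
open Matrix

/-- The real-linear map `B ↦ (B + Bᵀ) + i (B - Bᵀ)` from real matrices to complex matrices,
whose values are Hermitian. -/
noncomputable def hermitianOfReal (ι : Type*) : Matrix ι ι ℝ →ₗ[ℝ] Matrix ι ι ℂ where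
  toFun B := Matrix.of fun i j => ⟨B i j + B j i, B i j - B j i⟩
  map_add' B C := by
    ext i j
    apply Complex.ext <;> simp <;> ring
  map_smul' c B := by
    ext i j
    apply Complex.ext <;> simp <;> ring

lemma hermitianOfReal_apply {ι : Type*} (B : Matrix ι ι ℝ) (i j : ι) :
    hermitianOfReal ι B i j = ⟨B i j + B j i, B i j - B j i⟩ := rfl

lemma isHermitian_hermitianOfReal {ι : Type*} (B : Matrix ι ι ℝ) :
    (hermitianOfReal ι B).IsHermitian := by
  ext i j
  apply Complex.ext <;> simp [hermitianOfReal_apply, add_comm]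

lemma hermitianOfReal_injective (ι : Type*) : Function.Injective (hermitianOfReal ι) := by
  intro B C h
  ext i j
  have hij := congrFun (congrFun h i) j
  simp only [hermitianOfReal_apply, Complex.mk.injEq] at hij
  linarith [hij.1, hij.2]

/-- For `n ≥ 2` and `1 ≤ d ≤ (n-1)²`, condition (a) (linear independence over `ℝ`) does not
imply condition (b) (trivial intersection of the kernels). -/
theorem condition_a_not_implies_condition_b_of_le
    (n d : ℕ) (hn : 2 ≤ n) (hd1 : 1 ≤ d) (hd2 : d ≤ (n - 1) ^ 2) :
    ∃ A : Fin d → Matrix (Fin n) (Fin n) ℂ,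
      (∀ j, (A j).IsHermitian) ∧
      LinearIndependent ℝ A ∧
      (⋂ j, {z : Fin n → ℂ | (A j).mulVec z = 0}) ≠ {0} := by
  obtain ⟨m, rfl⟩ : ∃ m, n = m + 1 := ⟨n - 1, by omega⟩
  obtain ⟨e⟩ : Nonempty (Fin d ↪ Fin m × Fin m) :=
    Function.Embedding.nonempty_of_card_le (by simpa [sq] using hd2)
  let f : Fin d → Fin (m + 1) × Fin (m + 1) := fun k => ((e k).1.succ, (e k).2.succ)
  have hf : Function.Injective f := by
    intro k l h
    have h' : (e k).1 = (e l).1 ∧ (e k).2 = (e l).2 := by simpa [f] using h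
    exact e.injective (Prod.ext h'.1 h'.2)
  refine ⟨fun k => hermitianOfReal _ (Matrix.stdBasis ℝ _ _ (f k)),
    fun k => isHermitian_hermitianOfReal _, ?_, fun h => ?_⟩
  · exact ((Matrix.stdBasis ℝ (Fin (m + 1)) (Fin (m + 1))).linearIndependent.comp f hf).map'
      (hermitianOfReal _) (LinearMap.ker_eq_bot.2 (hermitianOfReal_injective _))
  · have h0 : (Pi.single 0 1 : Fin (m + 1) → ℂ) ∈ ({0} : Set (Fin (m + 1) → ℂ)) := by
      rw [← h]
      refine Set.mem_iInter.2 fun k => ?_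
      ext i
      apply Complex.ext <;>
        simp [f, hermitianOfReal_apply, Matrix.stdBasis_eq_single]
    simp at h0
end

section
/- Let A_1, A_2, A_3 be the 3×3 Hermitian matrices A_1 = [[1,0,0],[0,0,0],[0,0,0]], A_2 = [[0,1,0],[1,0,0],[0,0,0]], A_3 = [[0,0,1],[0,0,0],[1,0,0]]. Then: (i) A_1, A_2, A_3 are linearly independent over ℝ; (ii) ker A_1 ∩ ker A_2 ∩ ker A_3 = {0}; and (iii) for every (λ_1, λ_2, λ_3) ∈ ℝ³ the matrix λ_1 A_1 + λ_2 A_2 + λ_3 A_3 is not invertible. (Hence conditions (a) and (b) hold but the submanifold is not Levi nondegenerate in the sense of Tumanov.) -/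
open Matrix

/-- Beloshapka's example in `ℂ⁶`: three Hermitian `3 × 3` matrices satisfying conditions (a)
and (b), yet no real linear combination of them is invertible (failure of Tumanov
nondegeneracy). -/
theorem beloshapka_example_not_tumanov :
    let A : Fin 3 → Matrix (Fin 3) (Fin 3) ℂ :=
      ![!![1,0,0; 0,0,0; 0,0,0], !![0,1,0; 1,0,0; 0,0,0], !![0,0,1; 0,0,0; 1,0,0]]
    LinearIndependent ℝ A ∧
      (⋂ j, {z : Fin 3 → ℂ | (A j).mulVec z = 0}) = {0} ∧
      ∀ lam : Fin 3 → ℝ, ¬ IsUnit (lam 0 • A 0 + lam 1 • A 1 + lam 2 • A 2) := by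
  intro A
  refine ⟨?_, ?_, fun lam => ?_⟩
  · rw [Fintype.linearIndependent_iff]
    intro g hg i
    have entry : ∀ k, (∑ j, g j • A j) 0 k = 0 := fun k => by rw [hg]; rfl
    have h := entry i
    fin_cases i <;> simpa [A, Fin.sum_univ_three] using h
  · ext z
    simp only [Set.mem_iInter, Set.mem_ofPred_eq, Set.mem_singleton_iff]
    refine ⟨fun h => ?_, fun h j => by rw [h, mulVec_zero]⟩
    ext i
    have row := congrFun (h i) 0
    fin_cases i <;> simpa [A, mulVec, dotProduct, Fin.sum_univ_three] using row
  · rw [isUnit_iff_isUnit_det, isUnit_iff_ne_zero, not_not]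
    simp [A, det_fin_three]
end

section
/- Let A_1 = [[1,0],[0,0]], A_2 = [[0,0],[0,1]], A_3 = [[0,1],[1,0]], A_4 = [[0,i],[−i,0]] (2×2 Hermitian matrices). Then A_1, A_2, A_3, A_4 are linearly independent over ℝ, yet the sesquilinear Levi map 𝓛 : ℂ²×ℂ² → ℂ⁴ given by 𝓛(z, z′) = (z̄_1 z′_1, z̄_2 z′_2, z̄_1 z′_2 + z̄_2 z′_1, i z̄_1 z′_2 − i z̄_2 z′_1) is not surjective. (In particular, linear independence of the A_j does not imply surjectivity of the sesquilinear Levi map, contrary to Lemma 4.3.26 of Baouendi–Ebenfelt–Rothschild.) -/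
open Matrix

/-- Four linearly independent Hermitian `2 × 2` matrices whose sesquilinear Levi map
`𝓛(z, z') = (z̄₁z'₁, z̄₂z'₂, z̄₁z'₂ + z̄₂z'₁, i z̄₁z'₂ - i z̄₂z'₁)` is not surjective. -/
theorem sesquilinear_levi_not_surjective_example :
    let A : Fin 4 → Matrix (Fin 2) (Fin 2) ℂ :=
      ![!![1,0; 0,0], !![0,0; 0,1], !![0,1; 1,0], !![0,Complex.I; -Complex.I,0]]
    LinearIndependent ℝ A ∧
      ¬ Function.Surjective (fun p : (Fin 2 → ℂ) × (Fin 2 → ℂ) =>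
        (fun j => star p.1 ⬝ᵥ (A j).mulVec p.2 : Fin 4 → ℂ)) := by
  intro A
  constructor
  · rw [Fintype.linearIndependent_iff]
    intro g hg
    have h00 := congrFun (congrFun hg 0) 0
    have h11 := congrFun (congrFun hg 1) 1
    have h01 := congrFun (congrFun hg 0) 1
    simp [A, Fin.sum_univ_four, Complex.ext_iff] at h00 h11 h01
    intro j
    fin_cases j
    exacts [h00, h11, h01.1, h01.2]
  · intro h
    obtain ⟨⟨z, w⟩, hzw⟩ := h ![1, 1, 0, 0]
    have h0 := congrFun hzw 0
    have h1 := congrFun hzw 1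
    have h2 := congrFun hzw 2
    have h3 := congrFun hzw 3
    simp [A, dotProduct, mulVec, Fin.sum_univ_two] at h0 h1 h2 h3
    have hc : starRingEnd ℂ (z 0) * w 1 = 0 := by
      linear_combination (1 / 2) * h2 - (Complex.I / 2) * h3 +
        (1 / 2) * (starRingEnd ℂ (z 0) * w 1 - starRingEnd ℂ (z 1) * w 0) * Complex.I_mul_I
    exact one_ne_zero (α := ℂ) (by
      linear_combination (starRingEnd ℂ (z 1) * w 0) * hc - h0 * (starRingEnd ℂ (z 1) * w 1) - h1)
end

section
/- Let A_1 = [[1,0],[0,0]] and A_2 = [[0,0],[0,1]] (2×2 Hermitian matrices). Then: (i) A_1, A_2 are linearly independent over ℝ and ker A_1 ∩ ker A_2 = {0}; (ii) the sesquilinear Levi map 𝓛 : ℂ²×ℂ² → ℂ², 𝓛(z, z′) = (z̄_1 z′_1, z̄_2 z′_2), is surjective; (iii) the image of the Levi map L : ℂ² → ℝ², L(z) = (|z_1|², |z_2|²), equals [0,∞)×[0,∞), so L is not surjective onto ℝ². (Hence surjectivity of 𝓛 does not imply surjectivity of L, even when conditions (a) and (b) hold.) -/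
open Matrix

/-- For `A₁ = diag(1,0)`, `A₂ = diag(0,1)`: conditions (a) and (b) hold, the sesquilinear
Levi map `𝓛(z, z') = (z̄₁z'₁, z̄₂z'₂)` is surjective, but the image of the Levi map
`L(z) = (|z₁|², |z₂|²)` is `[0,∞) × [0,∞)`, so `L` is not surjective onto `ℝ²`. -/
theorem sesquilinear_surjective_levi_not_surjective_example :
    let A : Fin 2 → Matrix (Fin 2) (Fin 2) ℂ := ![!![1,0; 0,0], !![0,0; 0,1]]
    (LinearIndependent ℝ A ∧
        (⋂ j, {z : Fin 2 → ℂ | (A j).mulVec z = 0}) = {0}) ∧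
      Function.Surjective (fun p : (Fin 2 → ℂ) × (Fin 2 → ℂ) =>
        (fun j => star p.1 ⬝ᵥ (A j).mulVec p.2 : Fin 2 → ℂ)) ∧
      Set.range (fun z : Fin 2 → ℂ =>
          (fun j => (star z ⬝ᵥ (A j).mulVec z).re : Fin 2 → ℝ)) =
        {v : Fin 2 → ℝ | 0 ≤ v 0 ∧ 0 ≤ v 1} ∧
      ¬ Function.Surjective (fun z : Fin 2 → ℂ =>
          (fun j => (star z ⬝ᵥ (A j).mulVec z).re : Fin 2 → ℝ)) := by
  intro A
  have hmul (j : Fin 2) (w : Fin 2 → ℂ) : (A j).mulVec w = Pi.single j (w j) := by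
    ext i
    fin_cases j <;> fin_cases i <;> simp [A, Matrix.mulVec, dotProduct]
  have hform (z w : Fin 2 → ℂ) (j : Fin 2) :
      star z ⬝ᵥ (A j).mulVec w = star (z j) * w j := by
    rw [hmul, dotProduct_single, Pi.star_apply]
  have hlevi (z : Fin 2 → ℂ) (j : Fin 2) :
      (star z ⬝ᵥ (A j).mulVec z).re = Complex.normSq (z j) := by
    rw [hform, Complex.star_def, ← Complex.normSq_eq_conj_mul_self, Complex.ofReal_re]
  have hrange : Set.range (fun z : Fin 2 → ℂ =>
      (fun j => (star z ⬝ᵥ (A j).mulVec z).re : Fin 2 → ℝ)) =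
        {v : Fin 2 → ℝ | 0 ≤ v 0 ∧ 0 ≤ v 1} := by
    simp only [hlevi]
    ext v
    rw [Set.mem_ofPred_eq, ← Fin.forall_fin_two (p := fun j => 0 ≤ v j)]
    constructor
    · rintro ⟨z, rfl⟩ j
      exact Complex.normSq_nonneg _
    · intro hv
      refine ⟨fun j => (√(v j) : ℝ), funext fun j => ?_⟩
      simp only [Complex.normSq_ofReal, Real.mul_self_sqrt (hv j)]
  refine ⟨⟨?_, ?_⟩, ?_, hrange, ?_⟩
  · refine LinearIndependent.pair_iff.mpr fun s t hst => ?_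
    have h0 := congrFun (congrFun hst 0) 0
    have h1 := congrFun (congrFun hst 1) 1
    simp at h0 h1
    exact ⟨h0, h1⟩
  · ext z
    simp only [hmul, Set.mem_iInter, Set.mem_ofPred_eq, Pi.single_eq_zero_iff,
      Set.mem_singleton_iff]
    exact funext_iff.symm
  · intro v
    exact ⟨(1, v), funext fun j => (hform 1 v j).trans (by simp)⟩
  · intro hsurj
    have hmem : (fun _ => -1 : Fin 2 → ℝ) ∈ {v : Fin 2 → ℝ | 0 ≤ v 0 ∧ 0 ≤ v 1} := by
      rw [← hrange, hsurj.range_eq]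
      exact Set.mem_univ _
    norm_num at hmem
end

section
/- Let A_1, …, A_d be Hermitian n×n complex matrices with d ≥ 2, and suppose A_d = λ_1 A_1 + ⋯ + λ_{d−1} A_{d−1} for some real numbers λ_1, …, λ_{d−1} (so condition (a) fails). Let f : ℂ → ℂ be an entire function with f(ℝ) ⊆ ℝ, f(0) = 0 and f′(0) ≠ 0. Then the holomorphic map F : ℂⁿ×ℂ^d → ℂⁿ×ℂ^d defined by F(z, w) = (z, w_1, …, w_{d−1}, λ_1 w_1 + ⋯ + λ_{d−1} w_{d−1} + f(w_d − λ_1 w_1 − ⋯ − λ_{d−1} w_{d−1})) satisfies F(0) = 0, has invertible differential at 0, and maps the quadric Q into Q, i.e., if Im w_j = z̄ᵀ A_j z for all j = 1, …, d, then the same equations hold for F(z, w). (Hence when (a) fails, the stability group of Q at 0 is infinite dimensional.) -/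
open Matrix

/-- An injective continuous endomorphism of a finite-dimensional complex normed space is a unit. -/
lemma ContinuousLinearMap.isUnit_of_injective_of_finiteDimensional
    {E : Type*} [NormedAddCommGroup E] [NormedSpace ℂ E] [FiniteDimensional ℂ E]
    (L : E →L[ℂ] E) (hL : Function.Injective L) : IsUnit L := by
  have := FiniteDimensional.complete ℂ E
  exact ContinuousLinearMap.isUnit_iff_bijective.2
    ⟨hL, (LinearMap.injective_iff_surjective (f := (L : E →ₗ[ℂ] E))).1 hL⟩

/-- If `f` has nonzero derivative at `0` and `ℓ w = ∑ aᵢ wᵢ` involves only the first `d`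
coordinates, then replacing the last coordinate by `ℓ w + f (w_last - ℓ w)` has invertible differential at `0`. -/
lemma isUnit_fderiv_shear {n d : ℕ} {f : ℂ → ℂ} (hf : DifferentiableAt ℂ f 0)
    (hf' : deriv f 0 ≠ 0) (a : Fin d → ℂ) :
    IsUnit (fderiv ℂ (fun p : (Fin n → ℂ) × (Fin (d + 1) → ℂ) =>
      ((p.1, fun j => if j = Fin.last d then
            (∑ i : Fin d, a i * p.2 i.castSucc) +
              f (p.2 (Fin.last d) - ∑ i : Fin d, a i * p.2 i.castSucc)
          else p.2 j) : (Fin n → ℂ) × (Fin (d + 1) → ℂ))) 0) := by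
  let coord (j : Fin (d + 1)) : (Fin n → ℂ) × (Fin (d + 1) → ℂ) →L[ℂ] ℂ :=
    (ContinuousLinearMap.proj j).comp (ContinuousLinearMap.snd ℂ _ _)
  let comb : (Fin n → ℂ) × (Fin (d + 1) → ℂ) →L[ℂ] ℂ := ∑ i : Fin d, a i • coord i.castSucc
  have comb_apply (p) : comb p = ∑ i : Fin d, a i * p.2 i.castSucc := by
    simp [comb, coord]
  let last : (Fin n → ℂ) × (Fin (d + 1) → ℂ) →L[ℂ] ℂ :=
    comb + deriv f 0 • (coord (Fin.last d) - comb)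
  have hlast : HasFDerivAt (fun p => comb p + f ((coord (Fin.last d) - comb) p)) last 0 := by
    refine comb.hasFDerivAt.add (HasDerivAt.comp_hasFDerivAt _ ?_
      (coord (Fin.last d) - comb).hasFDerivAt)
    simpa using hf.hasDerivAt
  have hder := (ContinuousLinearMap.fst ℂ (Fin n → ℂ) (Fin (d + 1) → ℂ)).hasFDerivAt
    (x := 0) |>.prodMk (hasFDerivAt_pi.2 fun j : Fin (d + 1) =>
      show HasFDerivAt (fun p : (Fin n → ℂ) × (Fin (d + 1) → ℂ) => if j = Fin.last d then
            (∑ i : Fin d, a i * p.2 i.castSucc) +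
              f (p.2 (Fin.last d) - ∑ i : Fin d, a i * p.2 i.castSucc)
          else p.2 j) (if j = Fin.last d then last else coord j) 0 by
        split_ifs
        · simp only [← comb_apply]
          exact hlast
        · exact (coord j).hasFDerivAt)
  refine hder.fderiv.symm ▸
    ContinuousLinearMap.isUnit_of_injective_of_finiteDimensional _ ?_
  rw [injective_iff_map_eq_zero]
  rintro ⟨z, w⟩ h
  obtain ⟨hz, hw⟩ := Prod.mk_eq_zero.1 h
  have hinit (i : Fin d) : w i.castSucc = 0 := by
    simpa [coord, Fin.castSucc_ne_last] using congrFun hw i.castSucc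
  have hw_last : w (Fin.last d) = 0 := by
    simpa [last, comb_apply, hinit, coord, hf'] using congrFun hw (Fin.last d)
  refine Prod.mk_eq_zero.2 ⟨hz, funext fun j => ?_⟩
  exact Fin.lastCases hw_last hinit j

/-- If condition (a) fails for the Hermitian matrices `A₁, …, A_{d+1}` (the last one is a real
linear combination of the others, `d + 1 ≥ 2`), then for any entire `f` preserving `ℝ` with
`f(0) = 0`, `f'(0) ≠ 0`, the map
`F(z, w) = (z, w₁, …, w_d, ∑ λᵢ wᵢ + f(w_{d+1} - ∑ λᵢ wᵢ))` fixes `0`, has invertible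
differential at `0`, and maps the quadric `Q = {Im wⱼ = z̄ᵀAⱼz}` into itself. -/
theorem stability_group_infinite_when_a_fails
    (n d : ℕ) (hd : 1 ≤ d)
    (A : Fin (d + 1) → Matrix (Fin n) (Fin n) ℂ)
    (hA : ∀ j, (A j).IsHermitian)
    (lam : Fin d → ℝ)
    (hdep : A (Fin.last d) = ∑ i : Fin d, lam i • A i.castSucc)
    (f : ℂ → ℂ) (hf : Differentiable ℂ f) (hfr : ∀ x : ℝ, (f x).im = 0)
    (hf0 : f 0 = 0) (hf'0 : deriv f 0 ≠ 0)
    (F : (Fin n → ℂ) × (Fin (d + 1) → ℂ) → (Fin n → ℂ) × (Fin (d + 1) → ℂ))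
    (hF : ∀ z w, F (z, w) =
      (z, fun j => if j = Fin.last d then
            (∑ i : Fin d, (lam i : ℂ) * w i.castSucc) +
              f (w (Fin.last d) - ∑ i : Fin d, (lam i : ℂ) * w i.castSucc)
          else w j)) :
    F 0 = 0 ∧ IsUnit (fderiv ℂ F 0) ∧
      ∀ (z : Fin n → ℂ) (w : Fin (d + 1) → ℂ),
        (∀ j, (w j).im = (star z ⬝ᵥ (A j).mulVec z).re) →
        ∀ j, ((F (z, w)).2 j).im =
          (star (F (z, w)).1 ⬝ᵥ (A j).mulVec (F (z, w)).1).re := by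
  have hF' := funext fun p : (Fin n → ℂ) × (Fin (d + 1) → ℂ) => hF p.1 p.2
  refine ⟨?_, ?_, ?_⟩
  · refine (hF 0 0).trans (Prod.mk_eq_zero.2 ⟨rfl, funext fun j => ?_⟩)
    simp [hf0]
  · rw [show F = _ from hF']
    exact isUnit_fderiv_shear hf.differentiableAt hf'0 _
  · intro z w hw j
    rw [hF]
    dsimp only
    split_ifs with hj
    · subst hj
      have hcomb : (∑ i : Fin d, (lam i : ℂ) * w i.castSucc).im = (w (Fin.last d)).im := by
        rw [hw, hdep]
        simp [Matrix.sum_mulVec, Matrix.smul_mulVec, dotProduct_sum, dotProduct_smul, hw]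
      have hreal : w (Fin.last d) - ∑ i : Fin d, (lam i : ℂ) * w i.castSucc =
          ((w (Fin.last d) - ∑ i : Fin d, (lam i : ℂ) * w i.castSucc).re : ℂ) := by
        apply Complex.ext
        · simp
        · rw [Complex.sub_im, hcomb, sub_self, Complex.ofReal_im]
      rw [hreal, Complex.add_im, hfr, add_zero, hcomb, hw]
    · exact hw j
end

section
/- Let A_1, …, A_d be Hermitian n×n complex matrices with ⋂_{j=1}^d ker A_j = {0} (condition (b)), and let Q = {(z, w) ∈ ℂⁿ×ℂ^d : Im w_j = z̄ᵀ A_j z for j = 1, …, d}. Let a : U → ℂⁿ and b : U → ℂ^d be holomorphic on an open connected neighborhood U of 0 in ℂⁿ×ℂ^d, and suppose the holomorphic vector field X = Σ_i a_i ∂/∂z_i + Σ_j b_j ∂/∂w_j is tangent to Q, i.e., for every (z, w) ∈ Q ∩ U and every j = 1, …, d one has b_j(z, w)/(2i) − z̄ᵀ A_j a(z, w) = 0. Then a and b vanish identically on U. (In particular, condition (b) implies that Q is holomorphically nondegenerate at 0.) -/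
open Matrix

open Filter Topology Metric in
/-- One-variable identity principle along a complex line meeting a convex open set. -/
lemma DifferentiableOn.eq_zero_on_line {E F : Type*} [NormedAddCommGroup E] [NormedSpace ℂ E]
    [NormedAddCommGroup F] [NormedSpace ℂ F] [CompleteSpace F] {f : E → F} {B : Set E}
    (hf : DifferentiableOn ℂ f B) (hBo : IsOpen B) (hBc : Convex ℝ B) {v w : E} (hv : v ∈ B)
    (h : ∃ᶠ t : ℂ in 𝓝[≠] 0, f (v + t • w) = 0) {t : ℂ} (ht : v + t • w ∈ B) :
    f (v + t • w) = 0 := by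
  have hline : Differentiable ℂ fun t : ℂ => v + t • w := by fun_prop
  have hopen : IsOpen ((fun t : ℂ => v + t • w) ⁻¹' B) := hBo.preimage hline.continuous
  have hconvex : Convex ℝ ((fun t : ℂ => v + t • w) ⁻¹' B) := by
    intro x hx y hy p q hp hq hpq
    have := hBc hx hy hp hq hpq
    simp only [Set.mem_preimage] at this ⊢
    convert this using 1
    rw [smul_add, smul_add, add_smul, smul_assoc, smul_assoc, add_add_add_comm, ← add_smul, hpq,
      one_smul]
  have hana : AnalyticOnNhd ℂ (fun t : ℂ => f (v + t • w)) ((fun t : ℂ => v + t • w) ⁻¹' B) :=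
    (hf.comp hline.differentiableOn fun _ hx => hx).analyticOnNhd hopen
  exact hana.eqOn_zero_of_preconnected_of_frequently_eq_zero hconvex.isPreconnected
    (z₀ := 0) (by simpa using hv) h ht

open Filter Topology Metric in
/-- Identity theorem for holomorphic maps of several variables. -/
lemma DifferentiableOn.eqOn_zero_of_eventually_eq_zero {E F : Type*} [NormedAddCommGroup E]
    [NormedSpace ℂ E] [NormedAddCommGroup F] [NormedSpace ℂ F] [CompleteSpace F] {f : E → F}
    {U : Set E} (hf : DifferentiableOn ℂ f U) (hUo : IsOpen U) (hUc : IsPreconnected U)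
    {x₀ : E} (hx₀ : x₀ ∈ U) (h : ∀ᶠ x in 𝓝 x₀, f x = 0) : ∀ x ∈ U, f x = 0 := by
  suffices H : U ⊆ {x | ∀ᶠ y in 𝓝 x, f y = 0} from fun x hx => (H hx).self_of_nhds
  refine hUc.subset_of_closure_inter_subset isOpen_setOfPred_eventually_nhds ⟨x₀, hx₀, h⟩ ?_
  rintro p ⟨hp, hpU⟩
  obtain ⟨r, hr, hrU⟩ := Metric.isOpen_iff.1 hUo p hpU
  obtain ⟨q, hq, hqp⟩ := Metric.mem_closure_iff.1 hp r hr
  rw [dist_comm] at hqp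
  filter_upwards [ball_mem_nhds p hr] with x hx
  have hfreq : ∃ᶠ t : ℂ in 𝓝[≠] 0, f (q + t • (x - q)) = 0 := by
    have hlim : Tendsto (fun t : ℂ => q + t • (x - q)) (𝓝 0) (𝓝 q) := by
      have : Continuous fun t : ℂ => q + t • (x - q) := by fun_prop
      simpa using this.tendsto 0
    exact ((hlim.eventually hq).filter_mono nhdsWithin_le_nhds).frequently
  have := (hf.mono hrU).eq_zero_on_line isOpen_ball (convex_ball p r) (mem_ball.2 hqp) hfreq
    (t := 1) (by simpa using hx)
  simpa using this

open Filter Topology Metric in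
/-- A holomorphic map vanishing at the self-adjoint points near `0` vanishes near `0`. -/
lemma eventually_eq_zero_of_isSelfAdjoint {E F : Type*} [NormedAddCommGroup E] [NormedSpace ℂ E]
    [StarAddMonoid E] [NormedStarGroup E] [StarModule ℂ E]
    [NormedAddCommGroup F] [NormedSpace ℂ F] [CompleteSpace F] {f : E → F}
    (hf : ∀ᶠ x in 𝓝 0, DifferentiableAt ℂ f x)
    (h : ∀ᶠ x in 𝓝 0, IsSelfAdjoint x → f x = 0) : ∀ᶠ x in 𝓝 0, f x = 0 := by
  obtain ⟨r, hr, hball⟩ := Metric.eventually_nhds_iff_ball.1 (hf.and h)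
  filter_upwards [ball_mem_nhds (0 : E) (half_pos hr)] with x hx
  rw [mem_ball_zero_iff] at hx
  let v : E := (1 / 2 : ℂ) • (x + star x)
  let w : E := (-Complex.I / 2) • (x - star x)
  have hvsa : IsSelfAdjoint v := by
    simp [v, IsSelfAdjoint, star_smul, add_comm]
  have hwsa : IsSelfAdjoint w := by
    rw [IsSelfAdjoint, star_smul, star_sub, star_star, ← neg_sub x, smul_neg, ← neg_smul]
    simp [w, neg_div]
  have hvx : v + Complex.I • w = x := by
    have hI : Complex.I * (-Complex.I / 2) = 1 / 2 := by
      linear_combination (-1 / 2) * Complex.I_mul_I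
    rw [smul_smul, hI, ← smul_add, add_add_sub_cancel, ← two_smul ℂ x, smul_smul]
    norm_num
  have hvnorm : ‖v‖ ≤ ‖x‖ := by
    have := norm_add_le x (star x)
    rw [norm_star] at this
    rw [norm_smul]
    norm_num
    linarith
  have hvball : v ∈ ball (0 : E) r := by
    rw [mem_ball_zero_iff]
    linarith
  have hfreq : ∃ᶠ t : ℂ in 𝓝[≠] 0, f (v + t • w) = 0 := by
    have hlim : Tendsto (fun s : ℝ => v + (s : ℂ) • w) (𝓝 0) (𝓝 v) := by
      have : Continuous fun s : ℝ => v + (s : ℂ) • w := by fun_prop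
      simpa using this.tendsto 0
    have hreal : ∀ᶠ s : ℝ in 𝓝[≠] 0, f (v + (s : ℂ) • w) = 0 := by
      filter_upwards [nhdsWithin_le_nhds (hlim.eventually (isOpen_ball.mem_nhds hvball))] with s hs
      refine (hball _ hs).2 (hvsa.add ?_)
      rw [IsSelfAdjoint, star_smul, hwsa.star_eq]
      simp
    have hofReal : Tendsto (fun s : ℝ => (s : ℂ)) (𝓝[≠] 0) (𝓝[≠] 0) := by
      refine tendsto_nhdsWithin_iff.2 ⟨?_, ?_⟩
      · simpa using (Complex.continuous_ofReal.tendsto 0).mono_left nhdsWithin_le_nhds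
      · filter_upwards [self_mem_nhdsWithin] with s hs
        simpa using hs
    exact hofReal.frequently hreal.frequently
  have hdiff : DifferentiableOn ℂ f (ball 0 r) := fun y hy =>
    (hball y hy).1.differentiableWithinAt
  rw [← hvx]
  refine hdiff.eq_zero_on_line isOpen_ball (convex_ball 0 r) hvball hfreq ?_
  rw [hvx, mem_ball_zero_iff]
  linarith

open Filter Topology in
/-- A vector whose dot product with every small vector is zero vanishes. -/
lemma eq_zero_of_eventually_dotProduct_eq_zero {n : ℕ} {v : Fin n → ℂ}
    (h : ∀ᶠ ζ : Fin n → ℂ in 𝓝 0, ζ ⬝ᵥ v = 0) : v = 0 := by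
  refine dotProduct_eq_zero v fun c => ?_
  have hlim : Tendsto (fun t : ℂ => t • c) (𝓝[≠] 0) (𝓝 0) := by
    have : Continuous fun t : ℂ => t • c := by fun_prop
    simpa using (this.tendsto 0).mono_left nhdsWithin_le_nhds
  obtain ⟨t, ht, ht0⟩ := ((hlim.eventually h).and self_mem_nhdsWithin).exists
  rw [smul_dotProduct, smul_eq_mul] at ht
  rw [dotProduct_comm]
  exact (mul_eq_zero.1 ht).resolve_left ht0

open Filter Topology in
/-- Polarization of the tangency equation: `z̄` may be replaced by an independent variable. -/
lemma eventually_tangency_polarized {n d : ℕ} {A : Fin d → Matrix (Fin n) (Fin n) ℂ}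
    {U : Set ((Fin n → ℂ) × (Fin d → ℂ))} (hUo : IsOpen U)
    (hU0 : (0 : (Fin n → ℂ) × (Fin d → ℂ)) ∈ U)
    {a : (Fin n → ℂ) × (Fin d → ℂ) → Fin n → ℂ}
    {b : (Fin n → ℂ) × (Fin d → ℂ) → Fin d → ℂ}
    (ha : DifferentiableOn ℂ a U) (hb : DifferentiableOn ℂ b U)
    (htan : ∀ p ∈ U, (∀ j, (p.2 j).im = (star p.1 ⬝ᵥ (A j).mulVec p.1).re) →
      ∀ j, b p j / (2 * Complex.I) - star p.1 ⬝ᵥ (A j).mulVec (a p) = 0) (j : Fin d) :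
    ∀ᶠ x : ((Fin n → ℂ) × (Fin d → ℂ)) × (Fin n → ℂ) in 𝓝 (0, 0),
      b x.1 j / (2 * Complex.I) - x.2 ⬝ᵥ (A j).mulVec (a x.1) = 0 := by
  let Z : (Fin n → ℂ) × (Fin n → ℂ) × (Fin d → ℂ) → Fin n → ℂ := fun x =>
    x.1 + Complex.I • x.2.1
  let Zc : (Fin n → ℂ) × (Fin n → ℂ) × (Fin d → ℂ) → Fin n → ℂ := fun x =>
    x.1 - Complex.I • x.2.1
  let Φ : (Fin n → ℂ) × (Fin n → ℂ) × (Fin d → ℂ) → (Fin n → ℂ) × (Fin d → ℂ) := fun x =>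
    (Z x, fun k => x.2.2 k + Complex.I * (Zc x ⬝ᵥ (A k).mulVec (Z x)))
  have hZc : Differentiable ℂ Zc := by fun_prop
  have hΦ : Differentiable ℂ Φ := by
    simp only [Φ, Z, Zc, dotProduct, mulVec]
    fun_prop
  have hΦ0 : Φ 0 = 0 := by ext <;> simp [Φ, Z, Zc]
  have hΦU : ∀ᶠ x in 𝓝 0, Φ x ∈ U :=
    hΦ.continuous.continuousAt.eventually (by rw [hΦ0]; exact hUo.mem_nhds hU0)
  have key : ∀ᶠ x in 𝓝 0,
      b (Φ x) j / (2 * Complex.I) - Zc x ⬝ᵥ (A j).mulVec (a (Φ x)) = 0 := by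
    apply eventually_eq_zero_of_isSelfAdjoint
    · filter_upwards [hΦU] with x hx
      have hax : DifferentiableAt ℂ (fun x => a (Φ x)) x :=
        (ha.differentiableAt (hUo.mem_nhds hx)).comp x (hΦ x)
      have hbx : DifferentiableAt ℂ (fun x => b (Φ x)) x :=
        (hb.differentiableAt (hUo.mem_nhds hx)).comp x (hΦ x)
      rw [differentiableAt_pi] at hax hbx
      have hZcx := differentiableAt_pi.1 (hZc x)
      simp only [dotProduct, mulVec, div_eq_mul_inv]
      exact ((hbx j).mul_const _).sub <| .fun_sum fun i _ =>
        (hZcx i).mul <| .fun_sum fun k _ => (hax k).const_mul _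
    · filter_upwards [hΦU] with x hx hsa
      have hx1 : star x.1 = x.1 := congrArg Prod.fst hsa.star_eq
      have hx2 : star x.2.1 = x.2.1 := congrArg (fun y => y.2.1) hsa.star_eq
      have hx3 : star x.2.2 = x.2.2 := congrArg (fun y => y.2.2) hsa.star_eq
      have hZ : star (Z x) = Zc x := by
        simp [Z, Zc, star_smul, hx1, hx2, sub_eq_add_neg]
      rw [← hZ]
      refine htan (Φ x) hx (fun k => ?_) j
      have him : (x.2.2 k).im = 0 := Complex.conj_eq_iff_im.1 (congrFun hx3 k)
      simp [Φ, hZ, him]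
  let Ψ : ((Fin n → ℂ) × (Fin d → ℂ)) × (Fin n → ℂ) →
      (Fin n → ℂ) × (Fin n → ℂ) × (Fin d → ℂ) := fun x =>
    ((1 / 2 : ℂ) • (x.1.1 + x.2), (-Complex.I / 2) • (x.1.1 - x.2),
      fun k => x.1.2 k - Complex.I * (x.2 ⬝ᵥ (A k).mulVec x.1.1))
  have hΨ : Continuous Ψ := by
    simp only [Ψ, dotProduct, mulVec]
    fun_prop
  have hΨ0 : Ψ (0, 0) = 0 := by ext <;> simp [Ψ]
  have hZΨ : ∀ x, Z (Ψ x) = x.1.1 := fun x => by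
    ext i
    simp only [Z, Ψ, Pi.add_apply, Pi.smul_apply, Pi.sub_apply, smul_eq_mul]
    linear_combination (-(x.1.1 i - x.2 i) / 2) * Complex.I_mul_I
  have hZcΨ : ∀ x, Zc (Ψ x) = x.2 := fun x => by
    ext i
    simp only [Zc, Ψ, Pi.add_apply, Pi.smul_apply, Pi.sub_apply, smul_eq_mul]
    linear_combination ((x.1.1 i - x.2 i) / 2) * Complex.I_mul_I
  have hΦΨ : ∀ x, Φ (Ψ x) = x.1 := fun x => by
    refine Prod.ext (hZΨ x) (funext fun k => ?_)
    simp only [Φ, hZΨ, hZcΨ]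
    simp [Ψ]
  have hlim : Tendsto Ψ (𝓝 (0, 0)) (𝓝 0) := hΨ0 ▸ hΨ.tendsto (0, 0)
  filter_upwards [hlim.eventually key] with x hx
  rwa [hΦΨ, hZcΨ] at hx

/-- Condition (b) implies the quadric `Q = {Im wⱼ = z̄ᵀAⱼz}` is holomorphically
nondegenerate: any holomorphic vector field `X = Σ aᵢ ∂/∂zᵢ + Σ bⱼ ∂/∂wⱼ` tangent to `Q`
(i.e. `bⱼ/(2i) - z̄ᵀAⱼa = 0` on `Q`) vanishes identically. -/
theorem condition_b_implies_holomorphically_nondegenerate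
    (n d : ℕ)
    (A : Fin d → Matrix (Fin n) (Fin n) ℂ)
    (hA : ∀ j, (A j).IsHermitian)
    (hker : (⋂ j, {z : Fin n → ℂ | (A j).mulVec z = 0}) = {0})
    (U : Set ((Fin n → ℂ) × (Fin d → ℂ))) (hUo : IsOpen U) (hUc : IsPreconnected U)
    (hU0 : (0 : (Fin n → ℂ) × (Fin d → ℂ)) ∈ U)
    (a : (Fin n → ℂ) × (Fin d → ℂ) → Fin n → ℂ)
    (b : (Fin n → ℂ) × (Fin d → ℂ) → Fin d → ℂ)
    (ha : DifferentiableOn ℂ a U) (hb : DifferentiableOn ℂ b U)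
    (htan : ∀ p ∈ U, (∀ j, (p.2 j).im = (star p.1 ⬝ᵥ (A j).mulVec p.1).re) →
      ∀ j, b p j / (2 * Complex.I) - star p.1 ⬝ᵥ (A j).mulVec (a p) = 0) :
    ∀ p ∈ U, a p = 0 ∧ b p = 0 := by
  have hpol := Filter.eventually_all.2 (eventually_tangency_polarized hUo hU0 ha hb htan)
  rw [nhds_prod_eq] at hpol
  have hzero : ∀ᶠ p in nhds 0, a p = 0 ∧ b p = 0 := by
    filter_upwards [hpol.curry] with p hp
    have hbp : b p = 0 := funext fun j => by
      simpa using hp.self_of_nhds j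
    refine ⟨?_, hbp⟩
    have hmem : a p ∈ ⋂ j, {z : Fin n → ℂ | (A j).mulVec z = 0} :=
      Set.mem_iInter.2 fun j => eq_zero_of_eventually_dotProduct_eq_zero <| by
        filter_upwards [hp] with ζ hζ
        simpa [hbp] using hζ j
    simpa [hker] using hmem
  intro p hp
  exact ⟨ha.eqOn_zero_of_eventually_eq_zero hUo hUc hU0 (hzero.mono fun _ h => h.1) p hp,
    hb.eqOn_zero_of_eventually_eq_zero hUo hUc hU0 (hzero.mono fun _ h => h.2) p hp⟩
end

section
/- (Chern–Moser) Let A be an invertible Hermitian (N−1)×(N−1) complex matrix, let h be a real-analytic real-valued function on a neighborhood of 0 in ℂ^{N−1}×ℝ with h(0) = 0 and all first- and second-order derivatives of h vanishing at 0, and let M = {(z, w) near 0 in ℂ^{N−1}×ℂ : Im w = z̄ᵀ A z + h(z, Re w)} (a real-analytic hypersurface through 0 with nondegenerate Levi form at 0). Let F and G be holomorphic maps from an open neighborhood of 0 in ℂ^N to ℂ^N with F(0) = G(0) = 0 and invertible differentials at 0, mapping M (intersected with their domains) into M. If F and G have the same derivatives at 0 up to order 2 (the same 2-jet at 0), then F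 = G on a neighborhood of 0. -/
open Matrix

section Osgood

open Complex MeasureTheory Metric
open scoped Real Topology

variable {Y : Type*} [NormedAddCommGroup Y] [NormedSpace ℂ Y]

theorem torusMap_const_mem_closedBall {n : ℕ} {r : ℝ} (hr : 0 ≤ r) (θ : Fin n → ℝ) :
    torusMap 0 (fun _ => r) θ ∈ closedBall (0 : Fin n → ℂ) r := by
  rw [mem_closedBall_zero_iff, pi_norm_le_iff_of_nonneg hr]
  intro i
  simp [torusMap, norm_exp_ofReal_mul_I, abs_of_nonneg hr]

theorem continuous_torusMap {n : ℕ} (c : Fin n → ℂ) (R : Fin n → ℝ) :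
    Continuous (torusMap c R) := by
  unfold torusMap
  fun_prop

theorem torusMap_const_sub_ne_zero {n : ℕ} {r : ℝ} {x : Fin n → ℂ}
    (hx : x ∈ ball 0 r) (θ : Fin n → ℝ) (i : Fin n) :
    torusMap 0 (fun _ => r) θ i - x i ≠ 0 := by
  have hr : 0 < r := pos_of_mem_ball hx
  intro h
  have h1 : ‖x i‖ = r := by
    rw [← sub_eq_zero.1 h]
    simp [torusMap, norm_exp_ofReal_mul_I, abs_of_pos hr]
  have h2 := norm_le_pi_norm x i
  rw [mem_ball_zero_iff] at hx
  linarith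

theorem continuous_cauchyKernel_torusMap {n : ℕ} {r : ℝ} {x : Fin n → ℂ}
    (hx : x ∈ ball 0 r) :
    Continuous fun θ => ∏ i, (torusMap 0 (fun _ => r) θ i - x i)⁻¹ := by
  refine continuous_finsetProd _ fun i _ => Continuous.inv₀ ?_ fun θ =>
    torusMap_const_sub_ne_zero hx θ i
  exact Continuous.sub ((continuous_apply i).comp (continuous_torusMap 0 fun _ => r))
    continuous_const

/-- The **Cauchy integral formula** on a polydisc. -/
theorem torusIntegral_cauchyKernel_smul [CompleteSpace Y] {n : ℕ} {r : ℝ}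
    {f : (Fin n → ℂ) → Y} (hf : DifferentiableOn ℂ f (closedBall 0 r)) {x : Fin n → ℂ}
    (hx : x ∈ ball 0 r) :
    (∯ ζ in T(0, fun _ => r), (∏ i, (ζ i - x i)⁻¹) • f ζ) = (2 * π * I : ℂ) ^ n • f x := by
  have hr : 0 < r := pos_of_mem_ball hx
  induction n with
  | zero =>
    simp only [torusIntegral_dim0, pow_zero, one_smul, Finset.univ_eq_empty, Finset.prod_empty]
    congr 1
    exact Subsingleton.elim _ _
  | succ n ih =>
    have hint : TorusIntegrable (fun ζ : Fin (n + 1) → ℂ => (∏ i, (ζ i - x i)⁻¹) • f ζ) 0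
        fun _ => r := by
      refine Continuous.integrableOn_Icc ?_
      refine (continuous_cauchyKernel_torusMap hx).smul ?_
      exact hf.continuousOn.comp_continuous (continuous_torusMap _ _)
        (torusMap_const_mem_closedBall hr.le)
    have hx0 : x 0 ∈ ball (0 : ℂ) r := by
      rw [mem_ball_zero_iff] at hx ⊢
      exact (norm_le_pi_norm x 0).trans_lt hx
    have hxt : Fin.tail x ∈ ball (0 : Fin n → ℂ) r := by
      rw [mem_ball_zero_iff] at hx ⊢
      refine (pi_norm_lt_iff hr).2 fun i => (norm_le_pi_norm x i.succ).trans_lt hx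
    have hcons : ∀ (a : ℂ) (y : Fin n → ℂ), a ∈ closedBall (0 : ℂ) r →
        y ∈ closedBall (0 : Fin n → ℂ) r →
        (Fin.cons a y : Fin (n + 1) → ℂ) ∈ closedBall (0 : Fin (n + 1) → ℂ) r := by
      intro a y ha hy
      rw [mem_closedBall_zero_iff] at ha hy ⊢
      rw [pi_norm_le_iff_of_nonneg hr.le] at hy ⊢
      intro i
      refine Fin.cases ?_ (fun i => ?_) i
      · simpa using ha
      · simpa using hy i
    rw [torusIntegral_succ hint]
    have key : Set.EqOn
        (fun a : ℂ => ∯ y in T((0 : Fin (n + 1) → ℂ) ∘ Fin.succ, (fun _ => r) ∘ Fin.succ),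
          (∏ i, ((Fin.cons a y : Fin (n + 1) → ℂ) i - x i)⁻¹) • f (Fin.cons a y))
        (fun a : ℂ => (a - x 0)⁻¹ • ((2 * π * I : ℂ) ^ n • f (Fin.cons a (Fin.tail x))))
        (sphere 0 r) := by
      intro a ha
      have hd : DifferentiableOn ℂ (fun y : Fin n → ℂ => f (Fin.cons a y)) (closedBall 0 r) := by
        refine hf.comp ?_ fun y hy => hcons a y (sphere_subset_closedBall ha) hy
        refine Differentiable.differentiableOn ?_
        rw [differentiable_pi]
        intro i
        refine Fin.cases ?_ (fun i => ?_) i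
        · simp
        · simp only [Fin.cons_succ]
          fun_prop
      have := ih hd hxt
      simp only [Fin.prod_univ_succ, Fin.cons_zero, Fin.cons_succ, mul_smul]
      rw [← this]
      exact torusIntegral_smul (a - x 0)⁻¹ _ _ _
    rw [show (0 : Fin (n + 1) → ℂ) 0 = 0 from rfl]
    rw [circleIntegral.integral_congr hr.le key]
    have hd : DifferentiableOn ℂ
        (fun a : ℂ => (2 * π * I : ℂ) ^ n • f (Fin.cons a (Fin.tail x))) (closedBall 0 r) := by
      refine DifferentiableOn.const_smul (hf.comp ?_ fun a ha =>
        hcons a _ ha (ball_subset_closedBall hxt)) _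
      refine Differentiable.differentiableOn ?_
      rw [differentiable_pi]
      intro i
      refine Fin.cases ?_ (fun i => ?_) i
      · simp only [Fin.cons_zero]
        fun_prop
      · simp
    rw [hd.circleIntegral_sub_inv_smul hx0, Fin.cons_self_tail, smul_smul, pow_succ']

/-- Integration against a fixed continuous function, as a continuous linear map on `C(K, ℂ)`. -/
noncomputable def integralSMulCLM [CompleteSpace Y] {K : Type*} [TopologicalSpace K]
    [CompactSpace K] [MeasurableSpace K] [OpensMeasurableSpace K]
    (μ : Measure K) [IsFiniteMeasure μ]
    (g : C(K, Y)) : C(K, ℂ) →L[ℂ] Y :=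
  LinearMap.mkContinuous
    { toFun := fun φ => ∫ t, φ t • g t ∂μ
      map_add' := by
        intro φ ψ
        simp only [ContinuousMap.add_apply, add_smul]
        exact integral_add
          ((φ • g).continuous.integrable_of_hasCompactSupport (HasCompactSupport.of_compactSpace _))
          ((ψ • g).continuous.integrable_of_hasCompactSupport (HasCompactSupport.of_compactSpace _))
      map_smul' := by
        intro c φ
        simp only [ContinuousMap.smul_apply, smul_assoc, integral_smul, RingHom.id_apply] }
    (‖g‖ * μ.real Set.univ) (by
      intro φ
      refine (norm_integral_le_of_norm_le_const (C := ‖φ‖ * ‖g‖) ?_).trans (le_of_eq (by ring))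
      refine Filter.Eventually.of_forall fun t => ?_
      rw [norm_smul]
      gcongr
      · exact φ.norm_coe_le_norm t
      · exact g.norm_coe_le_norm t)

theorem integralSMulCLM_apply [CompleteSpace Y] {K : Type*} [TopologicalSpace K]
    [CompactSpace K] [MeasurableSpace K] [OpensMeasurableSpace K]
    (μ : Measure K) [IsFiniteMeasure μ] (g : C(K, Y)) (φ : C(K, ℂ)) :
    integralSMulCLM μ g φ = ∫ t, φ t • g t ∂μ := rfl

theorem analyticAt_zero_of_differentiableOn_pi [CompleteSpace Y] {n : ℕ}
    {f : (Fin n → ℂ) → Y} {r : ℝ} (hr : 0 < r) (hf : DifferentiableOn ℂ f (closedBall 0 r)) :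
    AnalyticAt ℂ f 0 := by
  let S : Set (Fin n → ℝ) := Set.Icc (0 : Fin n → ℝ) fun _ => 2 * π
  let μ : Measure S := Measure.comap Subtype.val volume
  have hμ : IsFiniteMeasure μ := ⟨by
    rw [(MeasurableEmbedding.subtype_coe measurableSet_Icc).comap_apply, Set.image_univ,
      Subtype.range_coe]
    exact (isCompact_Icc : IsCompact S).measure_lt_top⟩
  let T : S → Fin n → ℂ := fun θ => torusMap 0 (fun _ => r) θ
  have hT : Continuous T := (continuous_torusMap _ _).comp continuous_subtype_val
  let e : Fin n → C(S, ℂ) := fun i => ⟨fun θ => T θ i, (continuous_apply i).comp hT⟩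
  let g : C(S, Y) := ⟨fun θ => (∏ i, (r * exp ((θ : Fin n → ℝ) i * I) * I : ℂ)) • f (T θ), by
    have hS : Continuous fun θ : Fin n → ℝ => (∏ i, (r * exp (θ i * I) * I : ℂ)) := by fun_prop
    refine (hS.comp continuous_subtype_val).smul ?_
    exact hf.continuousOn.comp_continuous hT fun θ => torusMap_const_mem_closedBall hr.le _⟩
  let κ : (Fin n → ℂ) → C(S, ℂ) := fun x =>
    ∏ i, Ring.inverse (e i - algebraMap ℂ C(S, ℂ) (x i))
  have hκ : AnalyticAt ℂ κ 0 := by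
    refine Finset.analyticAt_fun_prod _ fun i _ => ?_
    have hu : IsUnit (e i - algebraMap ℂ C(S, ℂ) ((0 : Fin n → ℂ) i)) := by
      rw [ContinuousMap.isUnit_iff_forall_ne_zero]
      intro θ
      exact torusMap_const_sub_ne_zero (mem_ball_self hr) _ i
    have h1 : AnalyticAt ℂ (Ring.inverse : C(S, ℂ) → C(S, ℂ))
        (e i - algebraMap ℂ C(S, ℂ) ((0 : Fin n → ℂ) i)) := analyticAt_inverse hu.unit
    refine AnalyticAt.fun_comp (f := fun x : Fin n → ℂ => e i - algebraMap ℂ C(S, ℂ) (x i)) h1 ?_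
    refine analyticAt_const.sub ?_
    exact ((Algebra.linearMap ℂ C(S, ℂ)).toContinuousLinearMap.comp
      (ContinuousLinearMap.proj (R := ℂ) (φ := fun _ : Fin n => ℂ) i)).analyticAt 0
  have hκ_apply : ∀ x ∈ ball (0 : Fin n → ℂ) r, ∀ θ : S, κ x θ = ∏ i, (T θ i - x i)⁻¹ := by
    intro x hx θ
    simp only [κ, ContinuousMap.prod_apply]
    refine Finset.prod_congr rfl fun i _ => ?_
    have hu : IsUnit (e i - algebraMap ℂ C(S, ℂ) (x i)) := by
      rw [ContinuousMap.isUnit_iff_forall_ne_zero]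
      intro θ
      exact torusMap_const_sub_ne_zero hx _ i
    have h1 := congrArg (fun φ : C(S, ℂ) => φ θ) (Ring.inverse_mul_cancel _ hu)
    exact eq_inv_of_mul_eq_one_left h1
  have hmain : AnalyticAt ℂ (fun x => ((2 * π * I : ℂ) ^ n)⁻¹ • integralSMulCLM μ g (κ x)) 0 :=
    (((integralSMulCLM μ g).analyticAt _).fun_comp hκ).const_smul
  refine hmain.congr ?_
  filter_upwards [ball_mem_nhds _ hr] with x hx
  rw [inv_smul_eq_iff₀ (pow_ne_zero _ two_pi_I_ne_zero), ← torusIntegral_cauchyKernel_smul hf hx,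
    integralSMulCLM_apply, torusIntegral]
  rw [← integral_subtype_comap measurableSet_Icc]
  refine integral_congr_ae (Filter.Eventually.of_forall fun θ => ?_)
  simp only [hκ_apply x hx, g, ContinuousMap.coe_mk]
  rw [smul_comm]

/-- **Osgood's lemma**: a complex differentiable map on an open subset of a finite-dimensional
complex vector space is analytic. -/
theorem DifferentiableOn.analyticAt_of_finiteDimensional [CompleteSpace Y] {X : Type*}
    [NormedAddCommGroup X] [NormedSpace ℂ X] [FiniteDimensional ℂ X] {f : X → Y} {U : Set X}
    {x : X} (hf : DifferentiableOn ℂ f U) (hU : U ∈ 𝓝 x) : AnalyticAt ℂ f x := by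
  let L : X ≃L[ℂ] (Fin (Module.finrank ℂ X) → ℂ) :=
    ContinuousLinearEquiv.ofFinrankEq (by simp)
  have hc : Filter.Tendsto (fun y => x + L.symm y) (𝓝 0) (𝓝 x) :=
    Continuous.tendsto' (by fun_prop) _ _ (by simp)
  obtain ⟨r, hr, hrU⟩ := Metric.nhds_basis_closedBall.mem_iff.1 (hc hU)
  have h1 : AnalyticAt ℂ (fun y => f (x + L.symm y)) 0 :=
    analyticAt_zero_of_differentiableOn_pi hr
      (hf.comp (Differentiable.differentiableOn (by fun_prop)) hrU)
  have h2 : AnalyticAt ℂ (fun y => L (y - x)) x :=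
    AnalyticAt.fun_comp (g := L) (f := fun y => y - x) (L.analyticAt _) (by fun_prop)
  have h3 := AnalyticAt.fun_comp (g := fun y => f (x + L.symm y)) (f := fun y => L (y - x))
    (x := x) (by simpa using h1) h2
  simpa using h3

end Osgood

section ModelEquation

open Complex Polynomial Filter
open scoped Topology ComplexConjugate

theorem infinite_norm_eq_one : {ζ : ℂ | ‖ζ‖ = 1}.Infinite := by
  have h1 := (isConnected_sphere (E := ℂ) (by simp [Complex.rank_real_complex])
    0 zero_le_one).isPreconnected.infinite_of_nontrivial ⟨1, by simp, -1, by simp, by norm_num⟩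
  exact h1.mono fun ζ hζ => by simpa using hζ

/-- A polynomial `P` for which `ζ⁻¹ P(ζ)` is real on the unit circle has only three nonzero
coefficients, related by conjugation. -/
theorem Polynomial.coeff_of_im_inv_mul_eval_eq_zero (P : ℂ[X])
    (hP : ∀ ζ : ℂ, ‖ζ‖ = 1 → (ζ⁻¹ * P.eval ζ).im = 0) :
    (∀ i, 3 ≤ i → P.coeff i = 0) ∧ P.coeff 2 = conj (P.coeff 0) ∧ (P.coeff 1).im = 0 := by
  set N := P.natDegree + 1 with hN
  set R : ℂ[X] := reflect N (P.map (starRingEnd ℂ)) with hR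
  have hdeg : (P.map (starRingEnd ℂ)).natDegree ≤ N := natDegree_map_le.trans (by omega)
  have key : X ^ N * P = X ^ 2 * R := by
    refine Polynomial.eq_of_infinite_eval_eq _ _ (infinite_norm_eq_one.mono fun ζ hζ => ?_)
    have hζ' : ‖ζ‖ = 1 := hζ
    have hζ0 : ζ ≠ 0 := by
      rintro rfl
      simp at hζ'
    have hcz : conj ζ = ζ⁻¹ := by
      rw [Complex.inv_def, Complex.normSq_eq_norm_sq, hζ']
      simp
    have h1 := conj_eq_iff_im.2 (hP ζ hζ')
    rw [map_mul, map_inv₀, hcz, inv_inv] at h1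
    let _ : Invertible ζ⁻¹ := invertibleOfNonzero (inv_ne_zero hζ0)
    have h2 := eval₂_reflect_mul_pow (RingHom.id ℂ) ζ⁻¹ N (P.map (starRingEnd ℂ)) hdeg
    rw [invOf_eq_inv, inv_inv] at h2
    have h3 : eval₂ (RingHom.id ℂ) ζ⁻¹ (P.map (starRingEnd ℂ)) = conj (P.eval ζ) := by
      rw [← hcz, eval₂_id, eval_map, eval₂_hom]
    rw [h3, eval₂_id, ← hR] at h2
    have h4 : ζ ^ N * (ζ⁻¹) ^ N = 1 := by rw [← mul_pow, mul_inv_cancel₀ hζ0, one_pow]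
    have h5 : eval ζ P = ζ ^ 2 * (eval ζ R * ζ⁻¹ ^ N) := by
      rw [h2, pow_two, mul_assoc, h1, mul_inv_cancel_left₀ hζ0]
    show eval ζ (X ^ N * P) = eval ζ (X ^ 2 * R)
    simp only [eval_mul, eval_pow, eval_X]
    rw [h5]
    linear_combination ζ ^ 2 * eval ζ R * h4
  have hcoeff : ∀ i, P.coeff i = (X ^ 2 * R).coeff (i + N) := fun i => by
    rw [← key, coeff_X_pow_mul]
  refine ⟨fun i hi => ?_, ?_, ?_⟩
  · rw [hcoeff, show i + N = (i + N - 2) + 2 by omega, coeff_X_pow_mul, hR, coeff_reflect,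
      revAt_eq_self_of_lt (by omega)]
    exact coeff_eq_zero_of_natDegree_lt (natDegree_map_le.trans_lt (by omega))
  · rw [hcoeff, add_comm, coeff_X_pow_mul, hR, coeff_reflect, revAt_le le_rfl, coeff_map]
    simp
  · have h1 := hcoeff 1
    rw [show 1 + N = P.natDegree + 2 by omega, coeff_X_pow_mul, hR, coeff_reflect,
      revAt_le (by omega), coeff_map, show N - P.natDegree = 1 by omega] at h1
    exact conj_eq_iff_im.1 h1.symm

theorem Polynomial.eq_of_eval_ofReal_eq (p q : ℂ[X])
    (h : ∀ u : ℝ, p.eval (u : ℂ) = q.eval (u : ℂ)) : p = q := by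
  refine Polynomial.eq_of_infinite_eval_eq _ _
    ((Set.infinite_range_of_injective Complex.ofReal_injective).mono ?_)
  rintro _ ⟨u, rfl⟩
  exact h u

theorem eq_zero_of_mul_pow_succ_eq {a b : ℂ} {q : ℝ} {j : ℕ}
    (h : ∀ u : ℝ, a * (u + q * I) ^ (j + 1) = b * (u + q * I) ^ j) : a = 0 ∧ b = 0 := by
  have hw : ∀ u : ℝ, u ≠ 0 → a * (u + q * I) = b := by
    intro u hu
    have h0 : (u + q * I : ℂ) ≠ 0 := fun h0 => hu (by simpa using congrArg Complex.re h0)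
    refine mul_right_cancel₀ (pow_ne_zero j h0) ?_
    rw [← h u]
    ring
  have e1 := hw 1 one_ne_zero
  have e2 := hw 2 two_ne_zero
  push_cast at e1 e2
  have ha : a = 0 := by linear_combination e2 - e1
  exact ⟨ha, by rw [← e1, ha, zero_mul]⟩

theorem eq_zero_of_mul_pow_sub_eq_conj {a b c : ℂ} {q : ℝ} (hq : q ≠ 0) {j : ℕ}
    (h : ∀ u : ℝ, a * (u + q * I) ^ (j + 2) - b * (u + q * I) ^ (j + 1) =
      c * (u - q * I) ^ (j + 2)) : c = 0 := by
  have hp := Polynomial.eq_of_eval_ofReal_eq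
    (C a * (X + C (q * I)) ^ (j + 2) - C b * (X + C (q * I)) ^ (j + 1))
    (C c * (X - C (q * I)) ^ (j + 2)) (fun u => by simpa using h u)
  have h1 := congrArg (Polynomial.eval (-(q * I : ℂ))) hp
  have h2 : (-(q * I) - q * I : ℂ) ≠ 0 := by
    rw [show (-(q * I) - q * I : ℂ) = -2 * q * I by ring]
    simp [hq]
  simp only [eval_sub, eval_mul, eval_C, eval_pow, eval_add, eval_X, neg_add_cancel] at h1
  rw [zero_pow (by omega), zero_pow (by omega), mul_zero, mul_zero, sub_zero] at h1
  exact (mul_eq_zero.1 h1.symm).resolve_right (pow_ne_zero _ h2)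

theorem eq_zero_of_im_mul_pow_sub_eq_zero {b c : ℂ} {q : ℝ} (hq : q ≠ 0) {j : ℕ}
    (h : ∀ u : ℝ, (b * (u + q * I) ^ (j + 3) - 2 * I * (c * (u + q * I) ^ (j + 2))).im = 0) :
    b = 0 ∧ c = 0 := by
  have h2 : (-(q * I) - q * I : ℂ) ≠ 0 := by
    rw [show (-(q * I) - q * I : ℂ) = -2 * q * I by ring]
    simp [hq]
  have hc : ∀ u : ℝ, b * (u + q * I) ^ (j + 3) - 2 * I * (c * (u + q * I) ^ (j + 2)) =
      conj b * (u - q * I) ^ (j + 3) + 2 * I * (conj c * (u - q * I) ^ (j + 2)) := by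
    intro u
    have := (conj_eq_iff_im.2 (h u)).symm
    rw [this]
    simp only [map_sub, map_mul, map_pow, map_add, conj_ofReal, conj_I, map_ofNat]
    ring
  have hp := Polynomial.eq_of_eval_ofReal_eq
    (C b * (X + C (q * I)) ^ (j + 3) - C (2 * I) * (C c * (X + C (q * I)) ^ (j + 2)))
    (C (conj b) * (X - C (q * I)) ^ (j + 3) + C (2 * I) * (C (conj c) * (X - C (q * I)) ^ (j + 2)))
    (fun u => by simpa using hc u)
  have h1 := congrArg (Polynomial.eval (-(q * I : ℂ))) hp
  simp only [eval_sub, eval_mul, eval_C, eval_pow, eval_add, eval_X, neg_add_cancel] at h1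
  have hcb' : conj c = q * conj b := by
    have h3 : (-(q * I) - q * I : ℂ) ^ (j + 2) * (2 * I) * (conj c - q * conj b) = 0 := by
      rw [zero_pow (by omega), zero_pow (by omega)] at h1
      linear_combination -h1
    have h4 : (-(q * I) - q * I : ℂ) ^ (j + 2) * (2 * I) ≠ 0 :=
      mul_ne_zero (pow_ne_zero _ h2) (by simp)
    exact sub_eq_zero.1 ((mul_eq_zero.1 h3).resolve_left h4)
  have hcb : c = q * b := by
    have := congrArg (starRingEnd ℂ) hcb'
    simpa using this
  have h5 : ∀ u : ℝ, b * (u + q * I) ^ (j + 1) = conj b * (u - q * I) ^ (j + 1) := by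
    intro u
    have h6 := hc u
    rw [hcb', hcb] at h6
    have ha : (u + q * I : ℂ) ≠ 0 := fun h0 => hq (by simpa using congrArg Complex.im h0)
    have hb : (u - q * I : ℂ) ≠ 0 := fun h0 => hq (by simpa using congrArg Complex.im h0)
    refine mul_left_cancel₀ (mul_ne_zero ha hb) ?_
    linear_combination h6
  have hp' := Polynomial.eq_of_eval_ofReal_eq
    (C b * (X + C (q * I)) ^ (j + 1)) (C (conj b) * (X - C (q * I)) ^ (j + 1))
    (fun u => by simpa using h5 u)
  have h7 := congrArg (Polynomial.eval (-(q * I : ℂ))) hp'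
  simp only [eval_sub, eval_mul, eval_C, eval_pow, eval_add, eval_X, neg_add_cancel] at h7
  rw [zero_pow (by omega), mul_zero] at h7
  have hb : b = 0 := by
    simpa using (mul_eq_zero.1 h7.symm).resolve_right (pow_ne_zero _ h2)
  exact ⟨hb, by rw [hcb, hb, mul_zero]⟩

variable {W : Type*} [NormedAddCommGroup W] [NormedSpace ℂ W]

/-- A holomorphic map `φ` with `β z (φ z) = 0` for a nondegenerate sesquilinear form `β` vanishes:
the identity may be differentiated in `z̄` alone. -/
theorem eq_zero_of_sesquilinear_self_eq_zero {β : W →ₗ⋆[ℂ] W →ₗ[ℂ] ℂ}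
    (hβc : Continuous fun p : W × W => β p.1 p.2) (hβ : ∀ v, (∀ z, β z v = 0) → v = 0)
    {φ : W → W} (hφ : Differentiable ℂ φ) (h : ∀ z, β z (φ z) = 0) (z : W) : φ z = 0 := by
  refine hβ _ fun η => ?_
  let B : W →L[ℂ] ℂ := ⟨β z, hβc.comp (by fun_prop : Continuous fun v : W => (z, v))⟩
  let P : ℂ → ℂ := fun s => B (φ (z + s • η))
  let R : ℂ → ℂ := fun s => β η (φ (z + s • η))
  have hPR : ∀ s, P s = -(conj s * R s) := by
    intro s
    have := h (z + s • η)
    rw [map_add, LinearMap.add_apply, LinearMap.map_smulₛₗ, LinearMap.smul_apply,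
      smul_eq_mul] at this
    exact eq_neg_of_add_eq_zero_left this
  have hP : DifferentiableAt ℂ P 0 := by
    have : Differentiable ℂ P := B.differentiable.comp (hφ.comp (by fun_prop))
    exact this 0
  have hR : Continuous R := by
    have hc : Continuous φ := hφ.continuous
    exact hβc.comp (by fun_prop : Continuous fun s : ℂ => (η, φ (z + s • η)))
  have hP0 : P 0 = 0 := by simp [hPR]
  have hline : ∀ v : ℂ, v ≠ 0 → -(conj v * R 0) = deriv P 0 * v := by
    intro v hv
    have hl : Tendsto (fun t : ℝ => (t : ℂ) * v) (𝓝[≠] 0) (𝓝[≠] 0) := by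
      refine tendsto_nhdsWithin_iff.2 ⟨?_, ?_⟩
      · exact tendsto_nhdsWithin_of_tendsto_nhds (Continuous.tendsto' (by fun_prop) _ _ (by simp))
      · filter_upwards [self_mem_nhdsWithin] with t ht
        simpa [hv] using ht
    have h1 := (hasDerivAt_iff_tendsto_slope.1 hP.hasDerivAt).comp hl
    have h2 : Tendsto (fun t : ℝ => -(conj v * R (t * v)) / v) (𝓝[≠] 0)
        (𝓝 (-(conj v * R 0) / v)) := by
      refine tendsto_nhdsWithin_of_tendsto_nhds (Continuous.tendsto' ?_ _ _ (by simp))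
      fun_prop
    have h3 := tendsto_nhds_unique (h1.congr' ?_) h2
    · rw [h3]
      field_simp
    · filter_upwards [self_mem_nhdsWithin] with t ht
      have ht' : (t : ℂ) ≠ 0 := by simpa using ht
      simp only [Function.comp_apply, slope_def_field, hP0, sub_zero, hPR, map_mul, conj_ofReal]
      field_simp
  have e1 := hline 1 one_ne_zero
  have e2 := hline I I_ne_zero
  simp only [map_one, one_mul, mul_one, conj_I] at e1 e2
  have : R 0 = 0 := by
    have h3 : I * (2 * R 0) = 0 := by linear_combination e2 - I * e1
    simpa using h3
  simpa [R] using this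

/-- The zero set of a nonzero quadratic form has empty interior. -/
theorem eq_zero_of_forall_quadratic_ne_zero {Q : W → ℝ}
    (hQ : ∀ z y, Q (z + y) + Q (z - y) = 2 * Q z + 2 * Q y)
    (hQs : ∀ (t : ℝ) z, Q ((t : ℂ) • z) = t ^ 2 * Q z) {z₀ : W} (hz₀ : Q z₀ ≠ 0)
    {ψ : W → ℂ} (hψ : Continuous ψ) (h : ∀ z, Q z ≠ 0 → ψ z = 0) (z : W) : ψ z = 0 := by
  by_cases hz : Q z = 0
  swap
  · exact h z hz
  have hprod : ∀ t : ℝ, t ≠ 0 → ψ (z + (t : ℂ) • z₀) * ψ (z - (t : ℂ) • z₀) = 0 := by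
    intro t ht
    by_contra hne
    have h1 := not_imp_comm.1 (h _) (left_ne_zero_of_mul hne)
    have h2 := not_imp_comm.1 (h _) (right_ne_zero_of_mul hne)
    have h3 := hQ z ((t : ℂ) • z₀)
    rw [h1, h2, hz, hQs] at h3
    have : t ^ 2 * Q z₀ = 0 := by linarith
    simp [ht, hz₀] at this
  have hlim : Tendsto (fun t : ℝ => ψ (z + (t : ℂ) • z₀) * ψ (z - (t : ℂ) • z₀)) (𝓝[≠] 0)
      (𝓝 (ψ z * ψ z)) :=
    tendsto_nhdsWithin_of_tendsto_nhds (Continuous.tendsto' (by fun_prop) _ _ (by simp))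
  have h0 : ψ z * ψ z = 0 := by
    refine tendsto_nhds_unique hlim (tendsto_const_nhds.congr' ?_)
    filter_upwards [self_mem_nhdsWithin] with t ht
    exact (hprod t ht).symm
  simpa using h0

/-- The bidegrees `(i, j)` of the monomials `zⁱ wʲ` of weight `m`, where `z` has weight one and
`w` has weight two. -/
def weightedBidegrees (m : ℕ) : Finset (ℕ × ℕ) :=
  (Finset.range (m + 1) ×ˢ Finset.range (m + 1)).filter fun x => x.1 + 2 * x.2 = m

theorem mem_weightedBidegrees {m : ℕ} {x : ℕ × ℕ} :
    x ∈ weightedBidegrees m ↔ x.1 + 2 * x.2 = m := by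
  simp only [weightedBidegrees, Finset.mem_filter, Finset.mem_product, Finset.mem_range]
  omega

theorem coeff_sum_weightedBidegrees (a : ℕ × ℕ → ℂ) {m i j : ℕ} (h : i + 2 * j = m) :
    (∑ x ∈ weightedBidegrees m, C (a x) * X ^ x.1).coeff i = a (i, j) := by
  simp only [finsetSum_coeff, coeff_C_mul, coeff_X_pow]
  rw [Finset.sum_eq_single (i, j)]
  · simp
  · rintro ⟨i', j'⟩ hx hne
    rw [mem_weightedBidegrees] at hx
    rw [if_neg, mul_zero]
    rintro rfl
    exact hne (Prod.ext rfl (by simp only at hx ⊢; omega))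
  · intro hx
    exact absurd (mem_weightedBidegrees.2 h) hx

theorem coeff_sum_weightedBidegrees_of_lt (a : ℕ × ℕ → ℂ) {m i : ℕ} (h : m < i) :
    (∑ x ∈ weightedBidegrees m, C (a x) * X ^ x.1).coeff i = 0 := by
  simp only [finsetSum_coeff, coeff_C_mul, coeff_X_pow]
  refine Finset.sum_eq_zero fun x hx => ?_
  rw [mem_weightedBidegrees] at hx
  rw [if_neg (by omega), mul_zero]

/-- Weighted homogeneous solutions of `Im g = 2 Re β(z, f)` on the model hyperquadric
`Im w = Q(z)` vanish as soon as their terms of order at most two do. -/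
theorem eq_zero_of_model_equation {Q : W → ℝ}
    (hQ : ∀ z y, Q (z + y) + Q (z - y) = 2 * Q z + 2 * Q y)
    (hQs : ∀ (t : ℝ) z, Q ((t : ℂ) • z) = t ^ 2 * Q z)
    (hQr : ∀ (ζ : ℂ) z, ‖ζ‖ = 1 → Q (ζ • z) = Q z) {z₀ : W} (hz₀ : Q z₀ ≠ 0)
    {β : W →ₗ⋆[ℂ] W →ₗ[ℂ] ℂ}
    (hβc : Continuous fun p : W × W => β p.1 p.2) (hβ : ∀ v, (∀ z, β z v = 0) → v = 0)
    {f : ℕ → ℕ → W → W} {g : ℕ → ℕ → W → ℂ}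
    (hf : ∀ i j (ζ : ℂ) z, f i j (ζ • z) = ζ ^ i • f i j z)
    (hg : ∀ i j (ζ : ℂ) z, g i j (ζ • z) = ζ ^ i • g i j z)
    (hfd : ∀ i j, Differentiable ℂ (f i j)) (hgd : ∀ i j, Continuous (g i j))
    (hf2 : ∀ i j, i + j ≤ 2 → ∀ z, f i j z = 0) (hg2 : ∀ i j, i + j ≤ 2 → ∀ z, g i j z = 0)
    {m : ℕ} (hm : 2 ≤ m)
    (hid : ∀ z (u : ℝ),
      (∑ x ∈ weightedBidegrees (m + 1), (u + Q z * I) ^ x.2 • g x.1 x.2 z).im =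
        2 * (β z (∑ x ∈ weightedBidegrees m, (u + Q z * I : ℂ) ^ x.2 • f x.1 x.2 z)).re) :
    (∀ i j, i + 2 * j = m → ∀ z, f i j z = 0) ∧
      ∀ i j, i + 2 * j = m + 1 → ∀ z, g i j z = 0 := by
  let P : W → ℝ → ℂ[X] := fun z u =>
    X * (∑ x ∈ weightedBidegrees (m + 1), C ((u + Q z * I) ^ x.2 * g x.1 x.2 z) * X ^ x.1) -
      C (2 * I) * ∑ x ∈ weightedBidegrees m,
        C ((u + Q z * I) ^ x.2 * β z (f x.1 x.2 z)) * X ^ x.1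
  have hP : ∀ z u (ζ : ℂ), ‖ζ‖ = 1 → (ζ⁻¹ * (P z u).eval ζ).im = 0 := by
    intro z u ζ hζ
    have hζ0 : ζ ≠ 0 := by
      rintro rfl
      simp at hζ
    have hcz : conj ζ = ζ⁻¹ := by
      rw [Complex.inv_def, Complex.normSq_eq_norm_sq, hζ]
      simp
    have h1 := hid (ζ • z) u
    rw [hQr ζ z hζ] at h1
    have h2 : ζ⁻¹ * (P z u).eval ζ =
        ∑ x ∈ weightedBidegrees (m + 1), (u + Q z * I) ^ x.2 • g x.1 x.2 (ζ • z) -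
        2 * I * β (ζ • z)
          (∑ x ∈ weightedBidegrees m, (u + Q z * I : ℂ) ^ x.2 • f x.1 x.2 (ζ • z)) := by
      simp only [P, eval_sub, eval_mul, eval_X, eval_C, eval_finsetSum, eval_pow, hf, hg, map_sum,
        map_smul, LinearMap.map_smulₛₗ, LinearMap.smul_apply, smul_eq_mul, hcz, mul_sub,
        Finset.mul_sum]
      congr 1
      · refine Finset.sum_congr rfl fun x _ => ?_
        field_simp
      · refine Finset.sum_congr rfl fun x _ => ?_
        ring
    rw [h2, sub_im, h1]
    simp
  have hcoeff := fun z u => Polynomial.coeff_of_im_inv_mul_eval_eq_zero (P z u) (hP z u)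
  have hpair : ∀ i j, i + 2 * (j + 1) = m + 1 → ∀ z u, (P z u).coeff (i + 1) =
      g i (j + 1) z * (u + Q z * I) ^ (j + 1) -
        2 * I * (β z (f (i + 1) j z) * (u + Q z * I) ^ j) := by
    intro i j hij z u
    simp only [P, coeff_sub, coeff_X_mul, coeff_C_mul]
    rw [coeff_sum_weightedBidegrees _ hij, coeff_sum_weightedBidegrees _ (j := j) (by omega)]
    ring
  have hfirst : ∀ j, 2 * j = m → ∀ z u, (P z u).coeff 0 =
      -(2 * I * (β z (f 0 j z) * (u + Q z * I) ^ j)) := by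
    intro j hj z u
    simp only [P, coeff_sub, coeff_X_mul_zero, coeff_C_mul]
    rw [coeff_sum_weightedBidegrees _ (j := j) (by omega)]
    ring
  have hf0 : ∀ j, 2 * j = m → ∀ z, f 0 j z = 0 := by
    intro j hj
    obtain ⟨j, rfl⟩ : ∃ j', j = j' + 1 := ⟨j - 1, by omega⟩
    rcases Nat.eq_zero_or_pos j with rfl | hjpos
    · exact hf2 0 1 (by omega)
    obtain ⟨j, rfl⟩ : ∃ j', j = j' + 1 := ⟨j - 1, by omega⟩
    refine eq_zero_of_sesquilinear_self_eq_zero hβc hβ (hfd _ _) ?_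
    have hcont : Continuous fun z => β z (f 0 (j + 1 + 1) z) :=
      hβc.comp (continuous_id.prodMk (hfd _ _).continuous)
    refine eq_zero_of_forall_quadratic_ne_zero hQ hQs hz₀ hcont fun z hz => ?_
    have h1 : ∀ u : ℝ, g 1 (j + 2) z * (u + Q z * I) ^ (j + 2) -
        2 * I * β z (f 2 (j + 1) z) * (u + Q z * I) ^ (j + 1) =
        2 * I * conj (β z (f 0 (j + 2) z)) * (u - Q z * I) ^ (j + 2) := by
      intro u
      have h2 := (hcoeff z u).2.1
      rw [hpair 1 (j + 1) (by omega), hfirst (j + 2) (by omega)] at h2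
      simp only [map_neg, map_mul, map_pow, map_add, conj_ofReal, conj_I, map_ofNat] at h2
      linear_combination h2
    have h3 := eq_zero_of_mul_pow_sub_eq_conj hz h1
    simpa using h3
  have hmain : ∀ i j, i + 2 * (j + 1) = m + 1 →
      ∀ z, g i (j + 1) z = 0 ∧ f (i + 1) j z = 0 := by
    intro i j hij
    have hof : (∀ z (u : ℝ), (P z u).coeff (i + 1) = 0) →
        ∀ z, g i (j + 1) z = 0 ∧ f (i + 1) j z = 0 := by
      intro h0
      have h1 : ∀ z, g i (j + 1) z = 0 ∧ 2 * I * β z (f (i + 1) j z) = 0 := fun z =>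
        eq_zero_of_mul_pow_succ_eq (q := Q z) (j := j) fun u => by
          have := h0 z u
          rw [hpair i j hij] at this
          linear_combination this
      exact fun z => ⟨(h1 z).1, eq_zero_of_sesquilinear_self_eq_zero hβc hβ (hfd _ _)
        (fun z => by simpa using (h1 z).2) z⟩
    rcases lt_or_ge i 2 with hi | hi
    swap
    · exact hof fun z u => (hcoeff z u).1 _ (by omega)
    interval_cases i
    · rcases lt_or_ge j 2 with hj | hj
      · obtain rfl : j = 1 := by omega
        exact fun z => ⟨hg2 _ _ (by omega) z, hf2 _ _ (by omega) z⟩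
      obtain ⟨j, rfl⟩ : ∃ j', j = j' + 2 := ⟨j - 2, by omega⟩
      have h1 : ∀ z, Q z ≠ 0 → g 0 (j + 2 + 1) z = 0 ∧ β z (f (0 + 1) (j + 2) z) = 0 := by
        intro z hz
        refine eq_zero_of_im_mul_pow_sub_eq_zero hz (j := j) fun u => ?_
        have := (hcoeff z u).2.2
        rwa [hpair 0 (j + 2) hij] at this
      have h2 := eq_zero_of_forall_quadratic_ne_zero hQ hQs hz₀ (hgd 0 (j + 2 + 1))
        fun z hz => (h1 z hz).1
      have hcont : Continuous fun z => β z (f (0 + 1) (j + 2) z) :=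
        hβc.comp (continuous_id.prodMk (hfd _ _).continuous)
      have h3 := eq_zero_of_forall_quadratic_ne_zero hQ hQs hz₀ hcont fun z hz => (h1 z hz).2
      exact fun z => ⟨h2 z, eq_zero_of_sesquilinear_self_eq_zero hβc hβ (hfd _ _) h3 z⟩
    · refine hof fun z u => ?_
      rw [(hcoeff z u).2.1, hfirst (j + 1) (by omega), hf0 (j + 1) (by omega)]
      simp
  refine ⟨fun i j hij => ?_, fun i j hij z => ?_⟩
  · rcases i with _ | i
    · exact hf0 j (by omega)
    · exact fun z => (hmain i j (by omega) z).2
  · rcases j with _ | j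
    · have h1 := (hcoeff z 0).1 (i + 1) (by omega)
      simp only [P, coeff_sub, coeff_X_mul, coeff_C_mul] at h1
      rw [coeff_sum_weightedBidegrees _ hij, coeff_sum_weightedBidegrees_of_lt _ (by omega)] at h1
      simpa using h1
    · exact (hmain i j hij z).1

end ModelEquation

section WeightedExpansion

open Filter Asymptotics
open scoped Topology

variable {W Y : Type*} [NormedAddCommGroup W] [NormedSpace ℂ W]
  [NormedAddCommGroup Y] [NormedSpace ℂ Y]

namespace FormalMultilinearSeries

/-- The part of bidegree `(i, j)` in `(z, w)` of a formal power series on `W × ℂ`, divided by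
`wʲ`. -/
noncomputable def bidegreeCoeff (p : FormalMultilinearSeries ℂ (W × ℂ) Y) (i j : ℕ) (z : W) : Y :=
  ∑ s ∈ Finset.powersetCard i (Finset.univ : Finset (Fin (i + j))),
    p (i + j) (s.piecewise (fun _ => (z, 0)) (fun _ => (0, 1)))

theorem apply_piecewise_smul (p : FormalMultilinearSeries ℂ (W × ℂ) Y) {n : ℕ}
    (s : Finset (Fin n)) (a b : ℂ) (z : W) :
    p n (s.piecewise (fun _ => (a • z, 0)) (fun _ => (0, b))) =
      (a ^ s.card * b ^ (n - s.card)) •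
        p n (s.piecewise (fun _ => (z, 0)) (fun _ => (0, 1))) := by
  have h := (p n).map_smul_univ (s.piecewise (fun _ => a) (fun _ => b))
    (s.piecewise (fun _ => ((z, 0) : W × ℂ)) (fun _ => (0, 1)))
  rw [Finset.prod_piecewise] at h
  simp only [Finset.univ_inter, Finset.prod_const, Finset.card_univ_sdiff, Fintype.card_fin] at h
  rw [← h]
  congr 1
  ext i : 1
  by_cases hi : i ∈ s <;> simp [hi]

theorem bidegreeCoeff_smul (p : FormalMultilinearSeries ℂ (W × ℂ) Y) (i j : ℕ) (ζ : ℂ) (z : W) :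
    p.bidegreeCoeff i j (ζ • z) = ζ ^ i • p.bidegreeCoeff i j z := by
  rw [bidegreeCoeff, bidegreeCoeff, Finset.smul_sum]
  refine Finset.sum_congr rfl fun s hs => ?_
  rw [apply_piecewise_smul, (Finset.mem_powersetCard.1 hs).2, one_pow, mul_one]

theorem differentiable_bidegreeCoeff (p : FormalMultilinearSeries ℂ (W × ℂ) Y) (i j : ℕ) :
    Differentiable ℂ (p.bidegreeCoeff i j) := by
  unfold bidegreeCoeff
  refine Differentiable.fun_sum fun s _ => ?_
  refine ((p (i + j)).contDiff (n := 1)).differentiable one_ne_zero |>.comp (differentiable_pi.2 fun k => ?_)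
  by_cases hk : k ∈ s
  · simp only [hk, Finset.piecewise_eq_of_mem]
    fun_prop
  · simp only [hk, not_false_eq_true, Finset.piecewise_eq_of_notMem]
    fun_prop

theorem apply_const_eq_sum_bidegreeCoeff (p : FormalMultilinearSeries ℂ (W × ℂ) Y) (n : ℕ)
    (z : W) (w : ℂ) :
    p n (fun _ => (z, w)) =
      ∑ x ∈ Finset.HasAntidiagonal.antidiagonal n, w ^ x.2 • p.bidegreeCoeff x.1 x.2 z := by
  have h := (p n).toMultilinearMap.map_add_univ (fun _ => ((z, 0) : W × ℂ)) (fun _ => (0, w))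
  have h1 : ((fun _ => ((z, 0) : W × ℂ)) + fun _ => (0, w) : Fin n → W × ℂ) =
      fun _ => (z, w) := by
    ext i : 1
    simp
  rw [h1, ← Finset.powerset_univ, Finset.sum_powerset, Finset.card_univ, Fintype.card_fin] at h
  refine h.trans ?_
  rw [Finset.Nat.sum_antidiagonal_eq_sum_range_succ_mk]
  refine Finset.sum_congr rfl fun i hi => ?_
  obtain ⟨j, rfl⟩ : ∃ j, n = i + j := ⟨n - i, by have := Finset.mem_range.1 hi; omega⟩
  rw [add_tsub_cancel_left, bidegreeCoeff, Finset.smul_sum]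
  refine Finset.sum_congr rfl fun s hs => ?_
  have h2 := p.apply_piecewise_smul s 1 w z
  rw [one_smul, one_pow, one_mul, (Finset.mem_powersetCard.1 hs).2, add_tsub_cancel_left] at h2
  exact h2

theorem bidegreeCoeff_eq_zero_of_apply_const {p : FormalMultilinearSeries ℂ (W × ℂ) Y} {i j : ℕ}
    (h : ∀ y, p (i + j) (fun _ => y) = 0) (z : W) : p.bidegreeCoeff i j z = 0 := by
  refine (Module.forall_dual_apply_eq_zero_iff ℂ _).1 fun φ => ?_
  let q : Polynomial ℂ := ∑ x ∈ Finset.HasAntidiagonal.antidiagonal (i + j),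
    Polynomial.C (φ (p.bidegreeCoeff x.1 x.2 z)) * Polynomial.X ^ x.2
  have hq : q = 0 := by
    refine Polynomial.funext fun w => ?_
    have h1 := congrArg φ (p.apply_const_eq_sum_bidegreeCoeff (i + j) z w)
    rw [h, map_zero, map_sum] at h1
    simp only [q, Polynomial.eval_finsetSum, Polynomial.eval_mul, Polynomial.eval_C,
      Polynomial.eval_pow, Polynomial.eval_X, Polynomial.eval_zero]
    rw [h1]
    refine Finset.sum_congr rfl fun x _ => ?_
    rw [map_smul, smul_eq_mul, mul_comm]
  have hc := congrArg (fun q => Polynomial.coeff q j) hq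
  simp only [q, Polynomial.finsetSum_coeff, Polynomial.coeff_C_mul, Polynomial.coeff_X_pow,
    Polynomial.coeff_zero] at hc
  rw [Finset.sum_eq_single (i, j)] at hc
  · simpa using hc
  · rintro ⟨i', j'⟩ hx hne
    rw [Finset.HasAntidiagonal.mem_antidiagonal] at hx
    rw [if_neg, mul_zero]
    rintro rfl
    exact hne (Prod.ext (by simp only at hx ⊢; omega) rfl)
  · intro hx
    exact (hx (by simp)).elim

end FormalMultilinearSeries

open FormalMultilinearSeries

theorem sum_antidiagonal_ite_eq_sum_weightedBidegrees {M : Type*} [AddCommMonoid M]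
    (F : ℕ × ℕ → M) (m : ℕ) :
    ∑ n ∈ Finset.range (m + 1), ∑ x ∈ Finset.HasAntidiagonal.antidiagonal n,
      (if x.1 + 2 * x.2 = m then F x else 0) = ∑ x ∈ weightedBidegrees m, F x := by
  rw [← Finset.sum_fiberwise_of_maps_to (s := weightedBidegrees m) (t := Finset.range (m + 1))
    (g := fun x => x.1 + x.2)]
  · refine Finset.sum_congr rfl fun n _ => ?_
    rw [← Finset.sum_filter]
    refine Finset.sum_congr (Finset.ext fun x => ?_) fun _ _ => rfl
    simp only [Finset.mem_filter, Finset.HasAntidiagonal.mem_antidiagonal, mem_weightedBidegrees]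
    omega
  · intro x hx
    rw [mem_weightedBidegrees] at hx
    simp only [Finset.mem_range]
    omega

/-- The leading weighted homogeneous part of an analytic function is its rescaled limit along the
parabolic curves `t ↦ (t z, t² ω t)`. -/
theorem HasFPowerSeriesAt.tendsto_inv_pow_smul_parabola {D : W × ℂ → Y}
    {p : FormalMultilinearSeries ℂ (W × ℂ) Y} (hp : HasFPowerSeriesAt D p 0) {m : ℕ}
    (hm : ∀ i j, i + 2 * j < m → ∀ z, p.bidegreeCoeff i j z = 0)
    {ω : ℝ → ℂ} {w : ℂ} (hω : Tendsto ω (𝓝[>] 0) (𝓝 w)) (z : W) :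
    Tendsto (fun t : ℝ => ((t : ℂ) ^ m)⁻¹ • D ((t : ℂ) • z, (t : ℂ) ^ 2 * ω t)) (𝓝[>] 0)
      (𝓝 (∑ x ∈ weightedBidegrees m, w ^ x.2 • p.bidegreeCoeff x.1 x.2 z)) := by
  have ht : Tendsto (fun t : ℝ => (t : ℂ)) (𝓝[>] 0) (𝓝 0) :=
    tendsto_nhdsWithin_of_tendsto_nhds (Continuous.tendsto' (by fun_prop) _ _ (by simp))
  have ht0 : ∀ᶠ t : ℝ in 𝓝[>] 0, (t : ℂ) ≠ 0 := by
    filter_upwards [self_mem_nhdsWithin] with t ht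
    exact Complex.ofReal_ne_zero.2 (ne_of_gt ht)
  let y : ℝ → W × ℂ := fun t => ((t : ℂ) • z, (t : ℂ) ^ 2 * ω t)
  have hyO : y =O[𝓝[>] 0] fun t : ℝ => (t : ℂ) := by
    have h1 : Tendsto (fun t : ℝ => ((z, (t : ℂ) * ω t) : W × ℂ)) (𝓝[>] 0) (𝓝 (z, 0 * w)) :=
      tendsto_const_nhds.prodMk_nhds (ht.mul hω)
    have h2 := (isBigO_refl (fun t : ℝ => (t : ℂ)) (𝓝[>] 0)).smul (h1.isBigO_one ℂ)
    refine (h2.congr_left fun t => ?_).trans (by simpa using isBigO_refl _ _)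
    simp only [y, Prod.smul_mk, smul_eq_mul]
    ring_nf
  have hy0 : Tendsto y (𝓝[>] 0) (𝓝 0) := hyO.trans_tendsto ht
  have hrem : (fun t => D (y t) - p.partialSum (m + 1) (y t)) =O[𝓝[>] 0]
      fun t : ℝ => (t : ℂ) ^ (m + 1) := by
    have h1 := (hp.isBigO_sub_partialSum_pow (m + 1)).comp_tendsto hy0
    refine (h1.congr_left fun t => by simp).trans ?_
    exact (hyO.norm_left.pow (m + 1))
  have hrem0 : Tendsto (fun t : ℝ => ((t : ℂ) ^ m)⁻¹ • (D (y t) - p.partialSum (m + 1) (y t)))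
      (𝓝[>] 0) (𝓝 0) := by
    have h1 := (isBigO_refl (fun t : ℝ => ((t : ℂ) ^ m)⁻¹) (𝓝[>] 0)).smul hrem
    refine h1.trans_tendsto (ht.congr' ?_)
    filter_upwards [ht0] with t ht
    rw [smul_eq_mul, pow_succ]
    field_simp
  have hsum : Tendsto (fun t : ℝ => ((t : ℂ) ^ m)⁻¹ • p.partialSum (m + 1) (y t)) (𝓝[>] 0)
      (𝓝 (∑ x ∈ weightedBidegrees m, w ^ x.2 • p.bidegreeCoeff x.1 x.2 z)) := by
    rw [← sum_antidiagonal_ite_eq_sum_weightedBidegrees]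
    simp only [FormalMultilinearSeries.partialSum, y, apply_const_eq_sum_bidegreeCoeff,
      Finset.smul_sum, bidegreeCoeff_smul]
    refine tendsto_finsetSum _ fun n _ => tendsto_finsetSum _ fun x _ => ?_
    rcases lt_trichotomy (x.1 + 2 * x.2) m with hx | hx | hx
    · simp only [hm _ _ hx, smul_zero, ite_self]
      exact tendsto_const_nhds
    · rw [if_pos hx]
      refine ((hω.pow x.2).smul_const (p.bidegreeCoeff x.1 x.2 z)).congr' ?_
      filter_upwards [ht0] with t ht
      rw [smul_smul, smul_smul, ← hx]
      congr 1
      field_simp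
      ring
    · rw [if_neg hx.ne']
      obtain ⟨k, hk⟩ : ∃ k, x.1 + 2 * x.2 = m + (k + 1) := ⟨x.1 + 2 * x.2 - m - 1, by omega⟩
      have h1 : Tendsto (fun t : ℝ => ((t : ℂ) ^ (k + 1) * ω t ^ x.2) •
          p.bidegreeCoeff x.1 x.2 z) (𝓝[>] 0) (𝓝 0) := by
        have := (((ht.pow (k + 1)).mul (hω.pow x.2)).smul_const (p.bidegreeCoeff x.1 x.2 z))
        simpa using this
      refine h1.congr' ?_
      filter_upwards [ht0] with t ht
      rw [smul_smul, smul_smul]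
      congr 1
      have h2 : (t : ℂ) ^ x.1 * (t : ℂ) ^ (2 * x.2) = (t : ℂ) ^ m * (t : ℂ) ^ (k + 1) := by
        rw [← pow_add, ← pow_add, hk]
      rw [mul_pow, ← pow_mul]
      field_simp
      linear_combination -(ω t ^ x.2) * h2
  rw [← zero_add (∑ x ∈ weightedBidegrees m, _)]
  refine (hrem0.add hsum).congr fun t => ?_
  rw [← smul_add, sub_add_cancel]

theorem HasFPowerSeriesAt.eventually_eq_zero_of_bidegreeCoeff {D : W × ℂ → Y}
    {p : FormalMultilinearSeries ℂ (W × ℂ) Y} (hp : HasFPowerSeriesAt D p 0)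
    (h : ∀ i j z, p.bidegreeCoeff i j z = 0) : ∀ᶠ x in 𝓝 0, D x = 0 := by
  filter_upwards [hp.eventually_hasSum] with x hx
  rw [zero_add] at hx
  refine hx.unique ?_
  convert hasSum_zero (α := Y) (β := ℕ) using 2 with n
  rw [show x = (x.1, x.2) from rfl, apply_const_eq_sum_bidegreeCoeff]
  simp [h]

theorem HasFPowerSeriesAt.bidegreeCoeff_eq_zero_of_iteratedFDeriv {D : W × ℂ → Y}
    {p : FormalMultilinearSeries ℂ (W × ℂ) Y} [CompleteSpace Y] (hp : HasFPowerSeriesAt D p 0)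
    {i j : ℕ} (h : iteratedFDeriv ℂ (i + j) D 0 = 0) (z : W) : p.bidegreeCoeff i j z = 0 := by
  obtain ⟨r, hr⟩ := hp
  refine bidegreeCoeff_eq_zero_of_apply_const (fun y => ?_) z
  have h1 := hr.factorial_smul y (i + j)
  rw [h, ← Nat.cast_smul_eq_nsmul ℂ] at h1
  exact (smul_eq_zero.1 h1).resolve_left (Nat.cast_ne_zero.2 (Nat.factorial_ne_zero _))

end WeightedExpansion

section SecondOrderVanishing

open Asymptotics Filter
open scoped Topology

/-- A real-analytic function whose first two derivatives vanish at `0` has difference quotients of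
size `o(‖x‖ + ‖y‖)`. -/
theorem AnalyticAt.isLittleO_sub_of_iteratedFDeriv_eq_zero {E : Type*} [NormedAddCommGroup E]
    [NormedSpace ℝ E] {h : E → ℝ} (hh : AnalyticAt ℝ h 0)
    (h1 : iteratedFDeriv ℝ 1 h 0 = 0) (h2 : iteratedFDeriv ℝ 2 h 0 = 0) :
    (fun p : E × E => h p.1 - h p.2) =o[𝓝 0] fun p => ‖p‖ * ‖p.1 - p.2‖ := by
  have hd1 : fderiv ℝ h 0 = 0 := by
    ext v
    have := congrArg (fun q => q fun _ => v) h1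
    simpa [iteratedFDeriv_one_apply] using this
  have hd2 : fderiv ℝ (fderiv ℝ h) 0 = 0 := by
    ext u v
    have := congrArg (fun q => q ![u, v]) h2
    simpa [iteratedFDeriv_two_apply] using this
  have hdo : fderiv ℝ h =o[𝓝 0] fun x : E => x := by
    have := hh.fderiv.differentiableAt.hasFDerivAt.isLittleO
    simpa [hd1, hd2] using this
  rw [isLittleO_iff]
  intro c hc
  have hev := (isLittleO_iff.1 hdo hc).and hh.eventually_analyticAt
  obtain ⟨δ, hδ, hball⟩ := Metric.eventually_nhds_iff_ball.1 hev
  filter_upwards [Metric.ball_mem_nhds (0 : E × E) hδ] with p hp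
  have hsub : ∀ x ∈ Metric.closedBall (0 : E) ‖p‖, x ∈ Metric.ball (0 : E) δ := by
    intro x hx
    rw [mem_closedBall_zero_iff] at hx
    rw [mem_ball_zero_iff] at hp ⊢
    exact hx.trans_lt hp
  have key := (convex_closedBall (0 : E) ‖p‖).norm_image_sub_le_of_norm_fderiv_le (𝕜 := ℝ) (f := h)
    (C := c * ‖p‖) (x := p.2) (y := p.1)
    (fun x hx => (hball x (hsub x hx)).2.differentiableAt)
    (fun x hx => (hball x (hsub x hx)).1.trans
      (mul_le_mul_of_nonneg_left (mem_closedBall_zero_iff.1 hx) hc.le))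
    (mem_closedBall_zero_iff.2 (norm_snd_le p)) (mem_closedBall_zero_iff.2 (norm_fst_le p))
  rwa [norm_mul, norm_norm, norm_norm, ← mul_assoc]

end SecondOrderVanishing

section LeviGraph

open Asymptotics Filter Complex
open scoped Topology ComplexConjugate

theorem isBigO_pow_of_tendsto_inv_pow_smul {Y : Type*} [NormedAddCommGroup Y] [NormedSpace ℂ Y]
    {X : ℝ → Y} {m : ℕ} {v : Y}
    (h : Tendsto (fun t : ℝ => ((t : ℂ) ^ m)⁻¹ • X t) (𝓝[>] 0) (𝓝 v)) :
    X =O[𝓝[>] 0] fun t => t ^ m := by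
  have h1 : (fun t : ℝ => (t : ℂ) ^ m) =O[𝓝[>] 0] fun t => t ^ m :=
    isBigO_of_le _ fun t => by simp
  have h2 := h1.smul (h.isBigO_one ℝ)
  refine h2.congr' ?_ (Eventually.of_forall fun t => by simp)
  filter_upwards [self_mem_nhdsWithin] with t ht
  have ht' : (t : ℂ) ≠ 0 := ofReal_ne_zero.2 (ne_of_gt ht)
  rw [smul_inv_smul₀ (pow_ne_zero m ht')]

theorem isBigO_fst_re_snd {W : Type*} [NormedAddCommGroup W] {X : ℝ → W × ℂ} {l : Filter ℝ}
    {g : ℝ → ℝ} (hX : X =O[l] g) :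
    (fun t => ((X t).1, (X t).2.re)) =O[l] g :=
  (isBigO_of_le _ fun _ => max_le_max le_rfl (abs_re_le_norm _)).trans hX

theorem isLittleO_sq_of_isBigO {W : Type*} [NormedAddCommGroup W] {h : W × ℝ → ℝ} (h0 : h 0 = 0)
    (hh : (fun p : (W × ℝ) × (W × ℝ) => h p.1 - h p.2) =o[𝓝 0] fun p => ‖p‖ * ‖p.1 - p.2‖)
    {y : ℝ → W × ℝ} (hy : y =O[𝓝[>] 0] fun t => t) :
    (fun t => h (y t)) =o[𝓝[>] 0] fun t => t ^ 2 := by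
  have hy0 : Tendsto (fun t => (y t, (0 : W × ℝ))) (𝓝[>] 0) (𝓝 0) :=
    (hy.trans_tendsto (tendsto_nhdsWithin_of_tendsto_nhds tendsto_id)).prodMk_nhds
      tendsto_const_nhds
  have h1 := hh.comp_tendsto hy0
  refine (h1.congr_left fun t => by simp [h0]).trans_isBigO ?_
  have h2 : (fun t => ‖y t‖ * ‖y t‖) =O[𝓝[>] 0] fun t => t * t := hy.norm_left.mul hy.norm_left
  refine h2.congr (fun t => ?_) fun t => (sq t).symm
  simp

variable {W : Type*} [NormedAddCommGroup W] [NormedSpace ℂ W]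

/-- The hypersurface `Im w = B(z, z) + h(z, Re w)`. -/
def leviGraph (B : W →ₗ⋆[ℂ] W →ₗ[ℂ] ℂ) (h : W × ℝ → ℝ) : Set (W × ℂ) :=
  {p | p.2.im = (B p.1 p.1).re + h (p.1, p.2.re)}

theorem mem_leviGraph {B : W →ₗ⋆[ℂ] W →ₗ[ℂ] ℂ} {h : W × ℝ → ℝ} {p : W × ℂ} :
    p ∈ leviGraph B h ↔ p.2.im = (B p.1 p.1).re + h (p.1, p.2.re) := Iff.rfl

theorem re_apply_smul_smul (B : W →ₗ⋆[ℂ] W →ₗ[ℂ] ℂ) (ζ : ℂ) (z : W) :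
    (B (ζ • z) (ζ • z)).re = ‖ζ‖ ^ 2 * (B z z).re := by
  rw [map_smul, LinearMap.map_smulₛₗ, LinearMap.smul_apply, smul_eq_mul, smul_eq_mul, ← mul_assoc,
    mul_conj, re_ofReal_mul, normSq_eq_norm_sq]

theorem re_apply_add_add {B : W →ₗ⋆[ℂ] W →ₗ[ℂ] ℂ} (hB : ∀ y z, B y z = conj (B z y)) (z y : W) :
    (B (z + y) (z + y)).re = (B z z).re + 2 * (B z y).re + (B y y).re := by
  have h1 : (B y z).re = (B z y).re := by rw [hB, conj_re]
  simp only [map_add, LinearMap.add_apply, add_re, h1]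
  ring

/-- The hypersurface contains curves that are asymptotic to any prescribed parabola
`t ↦ (t z, t² (u + i B(z, z)))` of the model hyperquadric. -/
theorem exists_parabola_mem_leviGraph {h : W × ℝ → ℝ} (h0 : h 0 = 0)
    (hh : (fun p : (W × ℝ) × (W × ℝ) => h p.1 - h p.2) =o[𝓝 0] fun p => ‖p‖ * ‖p.1 - p.2‖)
    (B : W →ₗ⋆[ℂ] W →ₗ[ℂ] ℂ) (z : W) (u : ℝ) :
    ∃ ω : ℝ → ℂ, Tendsto ω (𝓝[>] 0) (𝓝 (u + (B z z).re * I)) ∧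
      ∀ᶠ t : ℝ in 𝓝[>] 0, ((t : ℂ) • z, (t : ℂ) ^ 2 * ω t) ∈ leviGraph B h := by
  let y : ℝ → W × ℝ := fun t => ((t : ℂ) • z, t ^ 2 * u)
  have hy : y =O[𝓝[>] 0] fun t => t := by
    refine IsBigO.prod_left ?_ ?_
    · refine IsBigO.of_bound ‖z‖ (Eventually.of_forall fun t => ?_)
      rw [norm_smul, norm_real, mul_comm]
    · have h1 : (fun t : ℝ => t * u) =O[𝓝[>] 0] fun _ => (1 : ℝ) :=
        (tendsto_nhdsWithin_of_tendsto_nhds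
          (Continuous.tendsto (by fun_prop) 0)).isBigO_one ℝ
      refine ((isBigO_refl (fun t : ℝ => t) _).mul h1).congr (fun t => ?_) fun t => mul_one t
      ring
  refine ⟨fun t => u + (((B z z).re + h (y t) / t ^ 2 : ℝ) : ℂ) * I, ?_, ?_⟩
  · have h1 : Tendsto (fun t => (B z z).re + h (y t) / t ^ 2) (𝓝[>] 0) (𝓝 ((B z z).re + 0)) :=
      tendsto_const_nhds.add (isLittleO_sq_of_isBigO h0 hh hy).tendsto_div_nhds_zero
    rw [add_zero] at h1
    exact tendsto_const_nhds.add (((continuous_ofReal.tendsto _).comp h1).mul_const I)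
  · filter_upwards [self_mem_nhdsWithin] with t ht
    have ht' : t ≠ 0 := ne_of_gt ht
    rw [mem_leviGraph, ← ofReal_pow, re_apply_smul_smul, re_ofReal_mul, im_ofReal_mul]
    simp only [norm_real, Real.norm_eq_abs, sq_abs, add_re, ofReal_re, mul_re, I_re, mul_zero,
      ofReal_im, I_im, mul_one, sub_self, add_zero, add_im, mul_im, zero_add]
    change _ = _ + h (y t)
    field_simp

theorem tendsto_parabola {ω : ℝ → ℂ} {w : ℂ} (hω : Tendsto ω (𝓝[>] 0) (𝓝 w)) (z : W) :
    Tendsto (fun t : ℝ => ((t : ℂ) • z, (t : ℂ) ^ 2 * ω t)) (𝓝[>] 0) (𝓝 0) := by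
  have ht : Tendsto (fun t : ℝ => (t : ℂ)) (𝓝[>] 0) (𝓝 0) :=
    tendsto_nhdsWithin_of_tendsto_nhds (Continuous.tendsto' (by fun_prop) _ _ (by simp))
  have h1 := (ht.smul_const z).prodMk_nhds ((ht.pow 2).mul hω)
  rwa [zero_smul, zero_pow two_ne_zero, zero_mul] at h1

theorem tendsto_inv_smul_parabola {Y : Type*} [NormedAddCommGroup Y] [NormedSpace ℂ Y]
    {G : W × ℂ → Y} (hG : DifferentiableAt ℂ G 0) (hG0 : G 0 = 0) {ω : ℝ → ℂ} {w : ℂ}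
    (hω : Tendsto ω (𝓝[>] 0) (𝓝 w)) (z : W) :
    Tendsto (fun t : ℝ => (t : ℂ)⁻¹ • G ((t : ℂ) • z, (t : ℂ) ^ 2 * ω t)) (𝓝[>] 0)
      (𝓝 (fderiv ℂ G 0 (z, 0))) := by
  have ht : Tendsto (fun t : ℝ => (t : ℂ)) (𝓝[>] 0) (𝓝 0) :=
    tendsto_nhdsWithin_of_tendsto_nhds (Continuous.tendsto' (by fun_prop) _ _ (by simp))
  have h1 := hG.hasFDerivAt.hasFDerivWithinAt (s := Set.univ) |>.lim (tendsto_parabola hω z)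
    (c := fun t : ℝ => (t : ℂ)⁻¹) (v := (z, 0)) (by simp) ?_
  · simpa [hG0] using h1
  · have h2 : Tendsto (fun t : ℝ => ((z, (t : ℂ) * ω t) : W × ℂ)) (𝓝[>] 0) (𝓝 (z, 0 * w)) :=
      tendsto_const_nhds.prodMk_nhds (ht.mul hω)
    rw [zero_mul] at h2
    refine h2.congr' ?_
    filter_upwards [self_mem_nhdsWithin] with t ht
    have ht' : (t : ℂ) ≠ 0 := ofReal_ne_zero.2 (ne_of_gt ht)
    ext1
    · exact (inv_smul_smul₀ ht' z).symm
    · simp only [Prod.smul_mk, smul_eq_mul]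
      field_simp

/-- A map preserving the hypersurface preserves its complex tangent space at `0`. -/
theorem snd_fderiv_apply_eq_zero_of_mapsTo_leviGraph {B : W →ₗ⋆[ℂ] W →ₗ[ℂ] ℂ}
    (hBc : Continuous fun p : W × W => B p.1 p.2) {h : W × ℝ → ℝ} (h0 : h 0 = 0)
    (hh : (fun p : (W × ℝ) × (W × ℝ) => h p.1 - h p.2) =o[𝓝 0] fun p => ‖p‖ * ‖p.1 - p.2‖)
    {G : W × ℂ → W × ℂ} (hG : DifferentiableAt ℂ G 0) (hG0 : G 0 = 0)
    (hGM : ∀ᶠ p in 𝓝 0, p ∈ leviGraph B h → G p ∈ leviGraph B h) (z : W) :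
    (fderiv ℂ G 0 (z, 0)).2 = 0 := by
  have him : ∀ z, (fderiv ℂ G 0 (z, 0)).2.im = 0 := by
    intro z
    obtain ⟨ω, hω, hmem⟩ := exists_parabola_mem_leviGraph h0 hh B z 0
    let X : ℝ → W × ℂ := fun t => G ((t : ℂ) • z, (t : ℂ) ^ 2 * ω t)
    have hlim : Tendsto (fun t : ℝ => (t : ℂ)⁻¹ • X t) (𝓝[>] 0) (𝓝 (fderiv ℂ G 0 (z, 0))) :=
      tendsto_inv_smul_parabola hG hG0 hω z
    have hXO : X =O[𝓝[>] 0] fun t => t := by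
      simpa using isBigO_pow_of_tendsto_inv_pow_smul (m := 1) (by simpa using hlim)
    have hho := isLittleO_sq_of_isBigO h0 hh (isBigO_fst_re_snd hXO)
    have ht : Tendsto (fun t : ℝ => t) (𝓝[>] 0) (𝓝 0) :=
      tendsto_nhdsWithin_of_tendsto_nhds tendsto_id
    have hcont : Continuous fun p : W × ℂ => (B p.1 p.1).re :=
      continuous_re.comp (hBc.comp (by fun_prop : Continuous fun p : W × ℂ => (p.1, p.1)))
    have h1 : Tendsto (fun t : ℝ => t * (B ((t : ℂ)⁻¹ • X t).1 ((t : ℂ)⁻¹ • X t).1).re +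
        t * (h ((X t).1, (X t).2.re) / t ^ 2)) (𝓝[>] 0)
        (𝓝 (0 * (B (fderiv ℂ G 0 (z, 0)).1 (fderiv ℂ G 0 (z, 0)).1).re + 0 * 0)) :=
      (ht.mul ((hcont.tendsto _).comp hlim)).add (ht.mul hho.tendsto_div_nhds_zero)
    have h2 : Tendsto (fun t : ℝ => ((t : ℂ)⁻¹ • X t).2.im) (𝓝[>] 0)
        (𝓝 (fderiv ℂ G 0 (z, 0)).2.im) :=
      ((by fun_prop : Continuous fun p : W × ℂ => p.2.im).tendsto _).comp hlim
    rw [zero_mul, zero_mul, add_zero] at h1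
    refine tendsto_nhds_unique (h2.congr' ?_) h1
    filter_upwards [hmem, (tendsto_parabola hω z).eventually hGM, self_mem_nhdsWithin]
      with t hmem hGt ht
    have ht' : t ≠ 0 := ne_of_gt ht
    have h3 := mem_leviGraph.1 (hGt hmem)
    change (X t).2.im = (B (X t).1 (X t).1).re + h ((X t).1, (X t).2.re) at h3
    rw [Prod.smul_fst, Prod.smul_snd, re_apply_smul_smul, smul_eq_mul, ← ofReal_inv, im_ofReal_mul,
      h3, norm_real, Real.norm_eq_abs, sq_abs]
    field_simp
  refine Complex.ext ?_ (him z)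
  have h1 := him (I • z)
  rw [show ((I • z, 0) : W × ℂ) = I • (z, 0) by simp, map_smul, Prod.smul_snd, smul_eq_mul] at h1
  simpa using h1

/-- The leading weighted homogeneous part of the difference of two maps preserving the hypersurface
satisfies the linearized equation on the model hyperquadric. -/
theorem im_leading_part_eq_of_mapsTo_leviGraph {B : W →ₗ⋆[ℂ] W →ₗ[ℂ] ℂ}
    (hBc : Continuous fun p : W × W => B p.1 p.2) (hBh : ∀ y z, B y z = conj (B z y))
    {h : W × ℝ → ℝ} (h0 : h 0 = 0)
    (hh : (fun p : (W × ℝ) × (W × ℝ) => h p.1 - h p.2) =o[𝓝 0] fun p => ‖p‖ * ‖p.1 - p.2‖)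
    {F G : W × ℂ → W × ℂ} (hF : DifferentiableAt ℂ F 0) (hG : DifferentiableAt ℂ G 0)
    (hF0 : F 0 = 0) (hG0 : G 0 = 0)
    (hFM : ∀ᶠ p in 𝓝 0, p ∈ leviGraph B h → F p ∈ leviGraph B h)
    (hGM : ∀ᶠ p in 𝓝 0, p ∈ leviGraph B h → G p ∈ leviGraph B h)
    {p : FormalMultilinearSeries ℂ (W × ℂ) W} {q : FormalMultilinearSeries ℂ (W × ℂ) ℂ}
    (hp : HasFPowerSeriesAt (fun x => (F x - G x).1) p 0)
    (hq : HasFPowerSeriesAt (fun x => (F x - G x).2) q 0) {m : ℕ} (hm : 2 ≤ m)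
    (hpm : ∀ i j, i + 2 * j < m → ∀ z, p.bidegreeCoeff i j z = 0)
    (hqm : ∀ i j, i + 2 * j < m + 1 → ∀ z, q.bidegreeCoeff i j z = 0) (z : W) (u : ℝ) :
    (∑ x ∈ weightedBidegrees (m + 1),
      (u + (B z z).re * I) ^ x.2 • q.bidegreeCoeff x.1 x.2 z).im =
      2 * (B (fderiv ℂ G 0 (z, 0)).1 (∑ x ∈ weightedBidegrees m,
        (u + (B z z).re * I : ℂ) ^ x.2 • p.bidegreeCoeff x.1 x.2 z)).re := by
  obtain ⟨ω, hω, hmem⟩ := exists_parabola_mem_leviGraph h0 hh B z u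
  have ht : Tendsto (fun t : ℝ => t) (𝓝[>] 0) (𝓝 0) :=
    tendsto_nhdsWithin_of_tendsto_nhds tendsto_id
  let X : ℝ → W × ℂ := fun t => F ((t : ℂ) • z, (t : ℂ) ^ 2 * ω t)
  let Y : ℝ → W × ℂ := fun t => G ((t : ℂ) • z, (t : ℂ) ^ 2 * ω t)
  have hYlim : Tendsto (fun t : ℝ => (t : ℂ)⁻¹ • Y t) (𝓝[>] 0) (𝓝 (fderiv ℂ G 0 (z, 0))) :=
    tendsto_inv_smul_parabola hG hG0 hω z
  have hXlim : Tendsto (fun t : ℝ => (t : ℂ)⁻¹ • X t) (𝓝[>] 0) (𝓝 (fderiv ℂ F 0 (z, 0))) :=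
    tendsto_inv_smul_parabola hF hF0 hω z
  have hXO : X =O[𝓝[>] 0] fun t => t := by
    simpa using isBigO_pow_of_tendsto_inv_pow_smul (m := 1) (by simpa using hXlim)
  have hYO : Y =O[𝓝[>] 0] fun t => t := by
    simpa using isBigO_pow_of_tendsto_inv_pow_smul (m := 1) (by simpa using hYlim)
  have ha : Tendsto (fun t : ℝ => ((t : ℂ) ^ m)⁻¹ • (X t - Y t).1) (𝓝[>] 0) _ :=
    hp.tendsto_inv_pow_smul_parabola hpm hω z
  have hb : Tendsto (fun t : ℝ => ((t : ℂ) ^ (m + 1))⁻¹ • (X t - Y t).2) (𝓝[>] 0) _ :=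
    hq.tendsto_inv_pow_smul_parabola hqm hω z
  set φ := ∑ x ∈ weightedBidegrees m, (u + (B z z).re * I : ℂ) ^ x.2 • p.bidegreeCoeff x.1 x.2 z
  set ψ := ∑ x ∈ weightedBidegrees (m + 1),
    (u + (B z z).re * I : ℂ) ^ x.2 • q.bidegreeCoeff x.1 x.2 z
  have hDO : (fun t => X t - Y t) =O[𝓝[>] 0] fun t => t ^ m := by
    refine IsBigO.prod_left (isBigO_pow_of_tendsto_inv_pow_smul ha)
      ((isBigO_pow_of_tendsto_inv_pow_smul hb).trans ?_)
    have h1 := (isBigO_refl (fun t : ℝ => t ^ m) (𝓝[>] 0)).mul (ht.isBigO_one ℝ)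
    simpa [pow_succ] using h1
  have hho : (fun t => h ((X t).1, (X t).2.re) - h ((Y t).1, (Y t).2.re)) =o[𝓝[>] 0]
      fun t => t ^ (m + 1) := by
    have hP : (fun t => (((X t).1, (X t).2.re), ((Y t).1, (Y t).2.re))) =O[𝓝[>] 0]
        fun t : ℝ => t := (isBigO_fst_re_snd hXO).prod_left (isBigO_fst_re_snd hYO)
    refine (hh.comp_tendsto (hP.trans_tendsto ht)).trans_isBigO ?_
    refine (hP.norm_left.mul (isBigO_fst_re_snd hDO).norm_left).congr (fun t => ?_) fun t => ?_
    · simp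
    · ring
  have h1 : Tendsto (fun t : ℝ =>
      2 * (B ((t : ℂ)⁻¹ • Y t).1 (((t : ℂ) ^ m)⁻¹ • (X t - Y t).1)).re +
      t ^ (m - 1) * (B (((t : ℂ) ^ m)⁻¹ • (X t - Y t).1) (((t : ℂ) ^ m)⁻¹ • (X t - Y t).1)).re +
      (h ((X t).1, (X t).2.re) - h ((Y t).1, (Y t).2.re)) / t ^ (m + 1)) (𝓝[>] 0)
      (𝓝 (2 * (B (fderiv ℂ G 0 (z, 0)).1 φ).re + 0 ^ (m - 1) * (B φ φ).re + 0)) := by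
    have hc : Continuous fun p : W × W => (B p.1 p.2).re := continuous_re.comp hBc
    have hY1 := (continuous_fst.tendsto _).comp hYlim
    exact ((((hc.tendsto _).comp (hY1.prodMk_nhds ha)).const_mul 2).add
      ((ht.pow (m - 1)).mul ((hc.tendsto _).comp (ha.prodMk_nhds ha)))).add
      hho.tendsto_div_nhds_zero
  rw [zero_pow (by omega), zero_mul, add_zero, add_zero] at h1
  refine tendsto_nhds_unique (((continuous_im.tendsto _).comp hb).congr' ?_) h1
  filter_upwards [hmem, (tendsto_parabola hω z).eventually hGM,
    (tendsto_parabola hω z).eventually hFM, self_mem_nhdsWithin] with t hmem hGt hFt ht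
  have ht' : t ≠ 0 := ne_of_gt ht
  have hFe := mem_leviGraph.1 (hFt hmem)
  have hGe := mem_leviGraph.1 (hGt hmem)
  change (X t).2.im = (B (X t).1 (X t).1).re + h ((X t).1, (X t).2.re) at hFe
  change (Y t).2.im = (B (Y t).1 (Y t).1).re + h ((Y t).1, (Y t).2.re) at hGe
  have hexp := re_apply_add_add hBh (Y t).1 (X t - Y t).1
  rw [Prod.fst_sub, add_sub_cancel, ← Prod.fst_sub] at hexp
  have hBs : (B ((t : ℂ)⁻¹ • Y t).1 (((t : ℂ) ^ m)⁻¹ • (X t - Y t).1)).re =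
      (t ^ (m + 1))⁻¹ * (B (Y t).1 (X t - Y t).1).re := by
    rw [Prod.smul_fst, map_smul, LinearMap.map_smulₛₗ, LinearMap.smul_apply, smul_eq_mul,
      smul_eq_mul, ← ofReal_inv, conj_ofReal, ← ofReal_pow, ← ofReal_inv, ← mul_assoc,
      ← ofReal_mul, re_ofReal_mul, pow_succ, mul_inv]
  have hBq : t ^ (m - 1) *
      (B (((t : ℂ) ^ m)⁻¹ • (X t - Y t).1) (((t : ℂ) ^ m)⁻¹ • (X t - Y t).1)).re =
      (t ^ (m + 1))⁻¹ * (B (X t - Y t).1 (X t - Y t).1).re := by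
    obtain ⟨k, rfl⟩ : ∃ k, m = k + 1 := ⟨m - 1, by omega⟩
    rw [re_apply_smul_smul, ← ofReal_pow, ← ofReal_inv, norm_real, Real.norm_eq_abs, sq_abs,
      add_tsub_cancel_right]
    field_simp
    ring
  rw [hBs, hBq, Function.comp_apply, ← ofReal_pow, ← ofReal_inv, smul_eq_mul, im_ofReal_mul,
    Prod.snd_sub, sub_im, hFe, hGe, hexp]
  ring

end LeviGraph

section JetDetermination

open Asymptotics Filter Complex
open scoped Topology ComplexConjugate

variable {W : Type*} [NormedAddCommGroup W] [NormedSpace ℂ W]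

theorem exists_re_apply_self_ne_zero [Nontrivial W] {B : W →ₗ⋆[ℂ] W →ₗ[ℂ] ℂ}
    (hBc : Continuous fun p : W × W => B p.1 p.2) (hBh : ∀ y z, B y z = conj (B z y))
    (hB : ∀ v, (∀ z, B z v = 0) → v = 0) : ∃ z, (B z z).re ≠ 0 := by
  by_contra! hre
  obtain ⟨z, hz⟩ := exists_ne (0 : W)
  refine hz (eq_zero_of_sesquilinear_self_eq_zero (φ := id) hBc hB differentiable_id
    (fun y => Complex.ext (hre y) ?_) z)
  exact conj_eq_iff_im.1 (hBh y y).symm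

theorem iteratedFDeriv_comp_sub_eq_zero {E Y Z : Type*} [NormedAddCommGroup E] [NormedSpace ℂ E]
    [NormedAddCommGroup Y] [NormedSpace ℂ Y] [CompleteSpace Y] [NormedAddCommGroup Z]
    [NormedSpace ℂ Z] (L : Y →L[ℂ] Z) {F G : E → Y} {x : E} (hF : AnalyticAt ℂ F x)
    (hG : AnalyticAt ℂ G x) {k : ℕ}
    (h : iteratedFDeriv ℂ k F x = iteratedFDeriv ℂ k G x) :
    iteratedFDeriv ℂ k (fun y => L (F y - G y)) x = 0 := by
  have hF' : ContDiffAt ℂ k F x := hF.contDiffAt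
  have hG' : ContDiffAt ℂ k G x := hG.contDiffAt
  have h1 := L.iteratedFDeriv_comp_left (f := F - G) (hF'.sub hG') le_rfl
  rw [iteratedFDeriv_sub_apply hF' hG', h, sub_self] at h1
  refine h1.trans ?_
  ext v
  simp

/-- Two local biholomorphisms preserving a Levi-nondegenerate hypersurface coincide if their
`2`-jets do. -/
theorem eventuallyEq_of_mapsTo_leviGraph [FiniteDimensional ℂ W] [Nontrivial W]
    {B : W →ₗ⋆[ℂ] W →ₗ[ℂ] ℂ}
    (hBc : Continuous fun p : W × W => B p.1 p.2) (hBh : ∀ y z, B y z = conj (B z y))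
    (hB : ∀ v, (∀ z, B z v = 0) → v = 0) {h : W × ℝ → ℝ} (h0 : h 0 = 0)
    (hh : (fun p : (W × ℝ) × (W × ℝ) => h p.1 - h p.2) =o[𝓝 0] fun p => ‖p‖ * ‖p.1 - p.2‖)
    {F G : W × ℂ → W × ℂ} (hF : AnalyticAt ℂ F 0) (hG : AnalyticAt ℂ G 0)
    (hF0 : F 0 = 0) (hG0 : G 0 = 0) (hGd : IsUnit (fderiv ℂ G 0))
    (hFM : ∀ᶠ p in 𝓝 0, p ∈ leviGraph B h → F p ∈ leviGraph B h)
    (hGM : ∀ᶠ p in 𝓝 0, p ∈ leviGraph B h → G p ∈ leviGraph B h)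
    (hjet : ∀ k ≤ 2, iteratedFDeriv ℂ k F 0 = iteratedFDeriv ℂ k G 0) : F =ᶠ[𝓝 0] G := by
  have : CompleteSpace W := FiniteDimensional.complete ℂ W
  obtain ⟨p, hp⟩ : AnalyticAt ℂ (fun x => (F x - G x).1) 0 :=
    (ContinuousLinearMap.fst ℂ W ℂ).analyticAt _ |>.comp (hF.sub hG)
  obtain ⟨q, hq⟩ : AnalyticAt ℂ (fun x => (F x - G x).2) 0 :=
    (ContinuousLinearMap.snd ℂ W ℂ).analyticAt _ |>.comp (hF.sub hG)
  have hp2 : ∀ i j, i + j ≤ 2 → ∀ z, p.bidegreeCoeff i j z = 0 := fun i j hij =>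
    hp.bidegreeCoeff_eq_zero_of_iteratedFDeriv
      (iteratedFDeriv_comp_sub_eq_zero (ContinuousLinearMap.fst ℂ W ℂ) hF hG (hjet _ hij))
  have hq2 : ∀ i j, i + j ≤ 2 → ∀ z, q.bidegreeCoeff i j z = 0 := fun i j hij =>
    hq.bidegreeCoeff_eq_zero_of_iteratedFDeriv
      (iteratedFDeriv_comp_sub_eq_zero (ContinuousLinearMap.snd ℂ W ℂ) hF hG (hjet _ hij))
  let C : W →ₗ[ℂ] W := ((ContinuousLinearMap.fst ℂ W ℂ) ∘L fderiv ℂ G 0 ∘L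
    (ContinuousLinearMap.inl ℂ W ℂ) : W →L[ℂ] W)
  have hC : ∀ z, C z = (fderiv ℂ G 0 (z, 0)).1 := fun z => rfl
  have hCinj : Function.Injective C := by
    refine (injective_iff_map_eq_zero C).2 fun z hz => ?_
    have h1 : fderiv ℂ G 0 (z, 0) = 0 := Prod.ext hz
      (snd_fderiv_apply_eq_zero_of_mapsTo_leviGraph hBc h0 hh hG.differentiableAt hG0 hGM z)
    obtain ⟨L, hL⟩ := hGd
    have h3 : (L⁻¹.1 * L.1) (z, 0) = 0 := by
      rw [mul_apply_eq_comp, hL, h1, map_zero]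
    rw [Units.inv_mul] at h3
    exact congrArg Prod.fst h3
  have hCsurj : Function.Surjective C := LinearMap.injective_iff_surjective.1 hCinj
  have hCc : Continuous C := C.continuous_of_finiteDimensional
  obtain ⟨z₀, hz₀⟩ := exists_re_apply_self_ne_zero hBc hBh hB
  have key : ∀ m, 2 ≤ m → (∀ i j, i + 2 * j < m → ∀ z, p.bidegreeCoeff i j z = 0) ∧
      ∀ i j, i + 2 * j < m + 1 → ∀ z, q.bidegreeCoeff i j z = 0 := by
    intro m hm
    induction m, hm using Nat.le_induction with
    | base => exact ⟨fun i j hij => hp2 i j (by omega), fun i j hij => hq2 i j (by omega)⟩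
    | succ m hm ih =>
      have hid := im_leading_part_eq_of_mapsTo_leviGraph hBc hBh h0 hh hF.differentiableAt
        hG.differentiableAt hF0 hG0 hFM hGM hp hq hm ih.1 ih.2
      have hstep := eq_zero_of_model_equation (Q := fun z => (B z z).re) (β := B ∘ₛₗ C)
        (f := p.bidegreeCoeff) (g := q.bidegreeCoeff) (m := m)
        (fun z y => by
          have h1 := re_apply_add_add hBh z y
          have h2 := re_apply_add_add hBh z (-y)
          simp only [map_neg, LinearMap.neg_apply, neg_neg, neg_re, ← sub_eq_add_neg] at h2
          linarith)
        (fun t z => by simp only [re_apply_smul_smul, norm_real, Real.norm_eq_abs, sq_abs])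
        (fun ζ z hζ => by simp only [re_apply_smul_smul, hζ, one_pow, one_mul]) hz₀
        (hBc.comp (by fun_prop : Continuous fun p : W × W => (C p.1, p.2)))
        (fun v hv => hB v fun z => by
          obtain ⟨y, rfl⟩ := hCsurj z
          exact hv y)
        p.bidegreeCoeff_smul q.bidegreeCoeff_smul p.differentiable_bidegreeCoeff
        (fun i j => (q.differentiable_bidegreeCoeff i j).continuous) hp2 hq2 hm hid
      refine ⟨fun i j hij => ?_, fun i j hij => ?_⟩
      · rcases Nat.lt_succ_iff_lt_or_eq.1 hij with hlt | heq
        · exact ih.1 i j hlt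
        · exact hstep.1 i j heq
      · rcases Nat.lt_succ_iff_lt_or_eq.1 hij with hlt | heq
        · exact ih.2 i j hlt
        · exact hstep.2 i j heq
  have hp0 := hp.eventually_eq_zero_of_bidegreeCoeff fun i j =>
    (key (i + 2 * j + 2) (by omega)).1 i j (by omega)
  have hq0 := hq.eventually_eq_zero_of_bidegreeCoeff fun i j =>
    (key (i + 2 * j + 2) (by omega)).2 i j (by omega)
  filter_upwards [hp0, hq0] with x hx1 hx2
  exact sub_eq_zero.1 (Prod.ext hx1 hx2)

end JetDetermination

section HermitianMatrix

open scoped ComplexConjugate ComplexOrder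

variable {ι : Type*} [Fintype ι]

/-- The sesquilinear form `(z, v) ↦ z̄ᵀ A v`. -/
def Matrix.starDotForm (A : Matrix ι ι ℂ) : (ι → ℂ) →ₗ⋆[ℂ] (ι → ℂ) →ₗ[ℂ] ℂ :=
  LinearMap.mk₂'ₛₗ (starRingEnd ℂ) (RingHom.id ℂ) (fun z v => star z ⬝ᵥ A *ᵥ v)
    (fun z y v => by rw [star_add, add_dotProduct])
    (fun c z v => by rw [star_smul, smul_dotProduct]; rfl)
    (fun z v y => by rw [mulVec_add, dotProduct_add])
    (fun c z v => by rw [mulVec_smul, dotProduct_smul]; rfl)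

theorem Matrix.starDotForm_apply (A : Matrix ι ι ℂ) (z v : ι → ℂ) :
    A.starDotForm z v = star z ⬝ᵥ A *ᵥ v := rfl

theorem Matrix.continuous_starDotForm (A : Matrix ι ι ℂ) :
    Continuous fun p : (ι → ℂ) × (ι → ℂ) => A.starDotForm p.1 p.2 := by
  simp only [starDotForm_apply]
  fun_prop

theorem Matrix.IsHermitian.starDotForm_conj_symm {A : Matrix ι ι ℂ} (hA : A.IsHermitian)
    (y z : ι → ℂ) : A.starDotForm y z = conj (A.starDotForm z y) := by
  rw [starDotForm_apply, starDotForm_apply, starRingEnd_apply, ← star_dotProduct_star, star_star,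
    star_mulVec, hA.eq, dotProduct_mulVec, dotProduct_comm]

theorem Matrix.starDotForm_nondegenerate [DecidableEq ι] {A : Matrix ι ι ℂ} (hA : IsUnit A)
    (v : ι → ℂ) (hv : ∀ z, A.starDotForm z v = 0) : v = 0 := by
  have h1 : A *ᵥ v = 0 := dotProduct_star_self_eq_zero.1 (hv (A *ᵥ v))
  exact (mulVec_injective_iff_isUnit.2 hA) (by rw [h1, mulVec_zero])

end HermitianMatrix

/-- (Chern–Moser) Let `M = {Im w = z̄ᵀAz + h(z, Re w)}` be a real-analytic hypersurface
through `0` in `ℂ^N = ℂ^{N-1} × ℂ` with nondegenerate Levi form at `0` (`A` an invertible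
Hermitian matrix, `h` real-analytic and vanishing to second order at `0`). Two local
biholomorphisms fixing `0` and preserving `M` with the same 2-jet at `0` coincide near `0`. -/
theorem chern_moser_finite_jet_determination
    (N : ℕ) (hN : 2 ≤ N)
    (A : Matrix (Fin (N - 1)) (Fin (N - 1)) ℂ) (hA : A.IsHermitian) (hAinv : IsUnit A)
    (V : Set ((Fin (N - 1) → ℂ) × ℝ)) (hVo : IsOpen V)
    (hV0 : (0 : (Fin (N - 1) → ℂ) × ℝ) ∈ V)
    (h : (Fin (N - 1) → ℂ) × ℝ → ℝ)
    (hra : AnalyticOnNhd ℝ h V) (h0 : h 0 = 0)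
    (h1 : iteratedFDeriv ℝ 1 h 0 = 0) (h2 : iteratedFDeriv ℝ 2 h 0 = 0)
    (M : Set ((Fin (N - 1) → ℂ) × ℂ))
    (hM : M = {p | (p.1, p.2.re) ∈ V ∧
      p.2.im = (star p.1 ⬝ᵥ A.mulVec p.1).re + h (p.1, p.2.re)})
    (U : Set ((Fin (N - 1) → ℂ) × ℂ)) (hUo : IsOpen U)
    (hU0 : (0 : (Fin (N - 1) → ℂ) × ℂ) ∈ U)
    (F G : (Fin (N - 1) → ℂ) × ℂ → (Fin (N - 1) → ℂ) × ℂ)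
    (hFh : DifferentiableOn ℂ F U) (hGh : DifferentiableOn ℂ G U)
    (hF0 : F 0 = 0) (hG0 : G 0 = 0)
    (hFd : IsUnit (fderiv ℂ F 0)) (hGd : IsUnit (fderiv ℂ G 0))
    (hFM : ∀ p ∈ M ∩ U, F p ∈ M) (hGM : ∀ p ∈ M ∩ U, G p ∈ M)
    (hjet : ∀ k ≤ 2, iteratedFDeriv ℂ k F 0 = iteratedFDeriv ℂ k G 0) :
    F =ᶠ[nhds 0] G := by
  have hN' : Nonempty (Fin (N - 1)) := ⟨⟨0, by omega⟩⟩
  have hcontinuous : Continuous fun p : (Fin (N - 1) → ℂ) × ℂ => (p.1, p.2.re) := by fun_prop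
  have hmaps : ∀ K : (Fin (N - 1) → ℂ) × ℂ → (Fin (N - 1) → ℂ) × ℂ, (∀ p ∈ M ∩ U, K p ∈ M) →
      ∀ᶠ p in nhds 0, p ∈ leviGraph A.starDotForm h → K p ∈ leviGraph A.starDotForm h := by
    intro K hK
    filter_upwards [hUo.mem_nhds hU0, (hVo.preimage hcontinuous).mem_nhds hV0] with p hpU hpV hp
    have h3 := hK p ⟨by rw [hM]; exact ⟨hpV, hp⟩, hpU⟩
    rw [hM] at h3
    exact h3.2
  exact eventuallyEq_of_mapsTo_leviGraph A.continuous_starDotForm hA.starDotForm_conj_symm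
    (starDotForm_nondegenerate hAinv) h0
    ((hra 0 hV0).isLittleO_sub_of_iteratedFDeriv_eq_zero h1 h2)
    (hFh.analyticAt_of_finiteDimensional (hUo.mem_nhds hU0))
    (hGh.analyticAt_of_finiteDimensional (hUo.mem_nhds hU0)) hF0 hG0 hGd
    (hmaps F hFM) (hmaps G hGM) hjet
end
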